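/- arXiv:1403.4847 — 2 statements merged into one kernel-verified Lean document; each statement's English description precedes it below -/
import Mathlib

section
/- Under the system model with MRC, for every k ∈ {1,…,K}, E[‖v_{jk}(t)‖²] = N λ_{jjk}² · x̃_{jk}ᴴ D_{δ(t)} Ψ_j⁻¹ D_{δ(t)}ᴴ x̃_{jk}. -/
open MeasureTheory ProbabilityTheory Matrix Complex
open scoped ProbabilityTheory Kronecker

/-- Deterministic phase-drift damping matrix
`D_{δ(t)} = diag(e^{−δ(t−1)/2}, …, e^{−δ(t−B)/2})`; the `b`-th diagonal entry
(`b : Fin B`, corresponding to pilot time `b+1`) is `e^{−δ(t−(b+1))/2}`. -/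
noncomputable def Dmat (δ : ℝ) (t B : ℕ) : Matrix (Fin B) (Fin B) ℂ :=
  Matrix.diagonal fun b => (Real.exp (-(δ / 2) * ((t : ℝ) - ((b : ℕ) + 1))) : ℂ)

/-- Deterministic pilot matrix `X_{ℓm}` built from the pilot sequence `xv`:
diagonal entries `|x(b)|²(1+κ²)` and off-diagonal entries `x(b₁)x(b₂)* e^{−δ|b₁−b₂|/2}`. -/
noncomputable def Xmat {B : ℕ} (κ δ : ℝ) (xv : Fin B → ℂ) : Matrix (Fin B) (Fin B) ℂ :=
  Matrix.of fun b₁ b₂ =>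
    if b₁ = b₂ then ((Complex.normSq (xv b₁) * (1 + κ ^ 2) : ℝ) : ℂ)
    else xv b₁ * star (xv b₂) * (Real.exp (-(δ / 2) * |((b₁ : ℕ) : ℝ) - ((b₂ : ℕ) : ℝ)|) : ℂ)

/-- Deterministic matrix `Ψ_j = Σ_ℓ Σ_m λ_{jℓm} X_{ℓm} + σ²ξ I_B`. -/
noncomputable def PsiMat {B L K : ℕ} (lam : Fin L → Fin K → ℝ) (σ2 ξ κ δ : ℝ)
    (x : Fin L → Fin K → Fin B → ℂ) : Matrix (Fin B) (Fin B) ℂ :=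
  (∑ l, ∑ m, ((lam l m : ℝ) : ℂ) • Xmat κ δ (x l m)) + ((σ2 * ξ : ℝ) : ℂ) • 1

/-- The uplink massive MIMO system model at base station `j`, on the probability space `Ω`,
with `N` antennas, pilot length `B`, `L` cells, `K` users per cell, channel attenuations
`lam l k = λ_{jlk}`, noise variance `σ2 = σ²`, noise amplification `ξ`, distortion parameter
`κ`, phase-drift variance `δ`, and deterministic pilot sequences `x l k : Fin B → ℂ`
(pilot time `b+1` for `b : Fin B`).  All underlying real random sources are mutually
independent: channel real/imaginary parts `hRe, hIm ~ N(0, λ_{jlk}/2)` (so the channel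
coefficients are `CN(0, λ_{jlk})`), phase-drift increments `dphi n u ~ N(0, δ)` (`u ≥ 1`),
distortion real/imaginary parts `zRe, zIm ~ N(0, 1/2)` (so `z ~ CN(0,1)`), and receiver-noise
real/imaginary parts `etaRe, etaIm ~ N(0, σ²ξ/2)` (so `η ~ CN(0, σ²ξ)`). -/
structure MIMOModel (Ω : Type*) [MeasureSpace Ω] (N B L K : ℕ)
    (lam : Fin L → Fin K → ℝ) (σ2 ξ κ δ : ℝ) (x : Fin L → Fin K → Fin B → ℂ) where
  hRe : Fin L → Fin K → Fin N → Ω → ℝ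
  hIm : Fin L → Fin K → Fin N → Ω → ℝ
  dphi : Fin N → ℕ → Ω → ℝ
  zRe : Fin N → ℕ → Ω → ℝ
  zIm : Fin N → ℕ → Ω → ℝ
  etaRe : Fin N → ℕ → Ω → ℝ
  etaIm : Fin N → ℕ → Ω → ℝ
  meas_hRe : ∀ l k n, Measurable (hRe l k n)
  meas_hIm : ∀ l k n, Measurable (hIm l k n)
  meas_dphi : ∀ n u, Measurable (dphi n u)
  meas_zRe : ∀ n s, Measurable (zRe n s)
  meas_zIm : ∀ n s, Measurable (zIm n s)
  meas_etaRe : ∀ n s, Measurable (etaRe n s)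
  meas_etaIm : ∀ n s, Measurable (etaIm n s)
  law_hRe : ∀ l k n, Measure.map (hRe l k n) ℙ = gaussianReal 0 (Real.toNNReal (lam l k / 2))
  law_hIm : ∀ l k n, Measure.map (hIm l k n) ℙ = gaussianReal 0 (Real.toNNReal (lam l k / 2))
  law_dphi : ∀ n u, Measure.map (dphi n u) ℙ = gaussianReal 0 (Real.toNNReal δ)
  law_zRe : ∀ n s, Measure.map (zRe n s) ℙ = gaussianReal 0 (Real.toNNReal (1 / 2))
  law_zIm : ∀ n s, Measure.map (zIm n s) ℙ = gaussianReal 0 (Real.toNNReal (1 / 2))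
  law_etaRe : ∀ n s, Measure.map (etaRe n s) ℙ = gaussianReal 0 (Real.toNNReal (σ2 * ξ / 2))
  law_etaIm : ∀ n s, Measure.map (etaIm n s) ℙ = gaussianReal 0 (Real.toNNReal (σ2 * ξ / 2))
  indep : iIndepFun (m := fun _ => (inferInstance : MeasurableSpace ℝ))
    (fun i : (Fin L × Fin K × Fin N × Bool) ⊕ (Fin N × ℕ) ⊕ (Fin N × ℕ × Bool) ⊕
        (Fin N × ℕ × Bool) =>
      match i with
      | Sum.inl (l, k, n, false) => hRe l k n
      | Sum.inl (l, k, n, true) => hIm l k n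
      | Sum.inr (Sum.inl (n, u)) => dphi n u
      | Sum.inr (Sum.inr (Sum.inl (n, s, false))) => zRe n s
      | Sum.inr (Sum.inr (Sum.inl (n, s, true))) => zIm n s
      | Sum.inr (Sum.inr (Sum.inr (n, s, false))) => etaRe n s
      | Sum.inr (Sum.inr (Sum.inr (n, s, true))) => etaIm n s) (ℙ : Measure Ω)

namespace MIMOModel

variable {Ω : Type*} [MeasureSpace Ω] {N B L K : ℕ} {lam : Fin L → Fin K → ℝ}
  {σ2 ξ κ δ : ℝ} {x : Fin L → Fin K → Fin B → ℂ}

variable (M : MIMOModel Ω N B L K lam σ2 ξ κ δ x)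

/-- Accumulated phase drift `φ_{jn}(s) = Σ_{u=1}^{s} Δ_{jn}(u)`. -/
noncomputable def phase (n : Fin N) (s : ℕ) (ω : Ω) : ℝ :=
  ∑ u ∈ Finset.Icc 1 s, M.dphi n u ω

/-- Channel coefficient `h_{jlk}^{(n)} ~ CN(0, λ_{jlk})`. -/
noncomputable def ch (l : Fin L) (k : Fin K) (n : Fin N) (ω : Ω) : ℂ :=
  Complex.mk (M.hRe l k n ω) (M.hIm l k n ω)

/-- Distortion variable `z_{jn}(s) ~ CN(0,1)`. -/
noncomputable def z (n : Fin N) (s : ℕ) (ω : Ω) : ℂ :=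
  Complex.mk (M.zRe n s ω) (M.zIm n s ω)

/-- Receiver noise `η_j^{(n)}(s) ~ CN(0, σ²ξ)`. -/
noncomputable def eta (n : Fin N) (s : ℕ) (ω : Ω) : ℂ :=
  Complex.mk (M.etaRe n s ω) (M.etaIm n s ω)

/-- Received pilot signal at antenna `n`, pilot time `b+1` (for `b : Fin B`):
`y_j^{(n)}(b) = e^{iφ_{jn}(b)} Σ_l Σ_m h_{jlm}^{(n)} x_{lm}(b)
  + κ (Σ_l Σ_m |x_{lm}(b)|² |h_{jlm}^{(n)}|²)^{1/2} z_{jn}(b) + η_j^{(n)}(b)`. -/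
noncomputable def y (n : Fin N) (b : Fin B) (ω : Ω) : ℂ :=
  Complex.exp (Complex.I * ((M.phase n ((b : ℕ) + 1) ω : ℝ) : ℂ))
      * ∑ l, ∑ m, M.ch l m n ω * x l m b
    + (κ : ℂ) * ((Real.sqrt (∑ l, ∑ m, Complex.normSq (x l m b)
        * Complex.normSq (M.ch l m n ω)) : ℝ) : ℂ) * M.z n ((b : ℕ) + 1) ω
    + M.eta n ((b : ℕ) + 1) ω

/-- Effective channel at time `t`: `h_{jlk}(t)` has `n`-th entry `e^{iφ_{jn}(t)} h_{jlk}^{(n)}`. -/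
noncomputable def hEff (l : Fin L) (k : Fin K) (t : ℕ) (n : Fin N) (ω : Ω) : ℂ :=
  Complex.exp (Complex.I * ((M.phase n t ω : ℝ) : ℂ)) * M.ch l k n ω

/-- LMMSE channel estimate `ĥ_{jlk}(t) = λ_{jlk} Σ_b c_b y_j(b)` with
`(c_1, …, c_B) = x̃_{lk}ᴴ D_{δ(t)} Ψ_j⁻¹`. -/
noncomputable def hHat (l : Fin L) (k : Fin K) (t : ℕ) (n : Fin N) (ω : Ω) : ℂ :=
  ((lam l k : ℝ) : ℂ) * ∑ b,
    Matrix.vecMul (star (x l k)) (Dmat δ t B * (PsiMat lam σ2 ξ κ δ x)⁻¹) b * M.y n b ω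

/-- Data-phase distortion noise `υ_j(t)` with `n`-th entry
`κ (Σ_l Σ_m p_{lm} |h_{jlm}^{(n)}|²)^{1/2} z_{jn}(t)`. -/
noncomputable def ups (p : Fin L → Fin K → ℝ) (t : ℕ) (n : Fin N) (ω : Ω) : ℂ :=
  (κ : ℂ) * ((Real.sqrt (∑ l, ∑ m, p l m * Complex.normSq (M.ch l m n ω)) : ℝ) : ℂ)
    * M.z n t ω

/-- The uplink SINR of user `k` in cell `j` at time `t` with the MRC filter
`v_{jk}(t) = ĥ_{jjk}(t)`. -/
noncomputable def SINR (p : Fin L → Fin K → ℝ) (j : Fin L) (k : Fin K) (t : ℕ) : ℝ :=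
  p j k * Complex.normSq (∫ ω, ∑ n, star (M.hHat j k t n ω) * M.hEff j k t n ω) /
    ((∑ l, ∑ m, p l m * ∫ ω, Complex.normSq (∑ n, star (M.hHat j k t n ω) * M.hEff l m t n ω))
      - p j k * Complex.normSq (∫ ω, ∑ n, star (M.hHat j k t n ω) * M.hEff j k t n ω)
      + (∫ ω, Complex.normSq (∑ n, star (M.hHat j k t n ω) * M.ups p t n ω))
      + σ2 * ξ * ∫ ω, ∑ n, Complex.normSq (M.hHat j k t n ω))

end MIMOModel

/-!
The antennas contribute equally, so it suffices to treat one of them. There `E[y yᴴ] = Ψ`: the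
rotated channel signal, the distortion and the noise are pairwise orthogonal because each new
source is centred and independent of the previous ones. The characteristic function of the
Gaussian phase increments gives `E[e^{i(φ(b) - φ(b'))}] = e^{-δ|b - b'|/2}`, which damps the
off-diagonal entries of the signal part; distortion and noise are uncorrelated in time and
contribute to the diagonal only. Hence `E|∑ c_b y_b|² = c Ψ cᴴ`, and for `c = x̃ᴴ D Ψ⁻¹` one factor
`Ψ` cancels against `Ψ⁻¹`.
-/

section CrossMoment

variable {Ω 𝕜 ι : Type*} [RCLike 𝕜] {mΩ : MeasurableSpace Ω} {μ : Measure Ω}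

/-- The uncentred cross moment `E[U V*]`, which is the covariance of `U` and `V` when one of them
is centred. -/
noncomputable def crossMoment (U V : Ω → 𝕜) (μ : Measure Ω) : 𝕜 :=
  ∫ ω, U ω * star (V ω) ∂μ

/-- The matrix `E[g gᴴ]` of second moments of a random vector `g`, given by its coordinates. -/
noncomputable def momentMatrix (g : ι → Ω → 𝕜) (μ : Measure Ω) : Matrix ι ι 𝕜 :=
  Matrix.of fun i j => crossMoment (g i) (g j) μ

lemma integrable_mul_star {U V : Ω → 𝕜} (hU : MemLp U 2 μ) (hV : MemLp V 2 μ) :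
    Integrable (fun ω => U ω * star (V ω)) μ :=
  hU.integrable_mul hV.star

lemma star_crossMoment (U V : Ω → 𝕜) : star (crossMoment U V μ) = crossMoment V U μ := by
  simp only [crossMoment, RCLike.star_def, ← integral_conj, map_mul, RCLike.conj_conj, mul_comm]

lemma isHermitian_momentMatrix (g : ι → Ω → 𝕜) : (momentMatrix g μ).IsHermitian :=
  Matrix.IsHermitian.ext fun i j => star_crossMoment (g j) (g i)

lemma crossMoment_self (U : Ω → 𝕜) : crossMoment U U μ = ((∫ ω, ‖U ω‖ ^ 2 ∂μ : ℝ) : 𝕜) := by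
  rw [crossMoment, ← integral_ofReal]
  simp only [RCLike.star_def, RCLike.mul_conj, RCLike.ofReal_pow]

lemma crossMoment_add_left {U U' V : Ω → 𝕜} (hU : MemLp U 2 μ) (hU' : MemLp U' 2 μ)
    (hV : MemLp V 2 μ) :
    crossMoment (fun ω => U ω + U' ω) V μ = crossMoment U V μ + crossMoment U' V μ := by
  simp only [crossMoment, add_mul]
  exact integral_add (integrable_mul_star hU hV) (integrable_mul_star hU' hV)

lemma crossMoment_add_right {U V V' : Ω → 𝕜} (hU : MemLp U 2 μ) (hV : MemLp V 2 μ)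
    (hV' : MemLp V' 2 μ) :
    crossMoment U (fun ω => V ω + V' ω) μ = crossMoment U V μ + crossMoment U V' μ := by
  rw [← star_crossMoment, crossMoment_add_left hV hV' hU, star_add, star_crossMoment,
    star_crossMoment]

lemma momentMatrix_add_of_orthogonal {U V : ι → Ω → 𝕜} (hU : ∀ i, MemLp (U i) 2 μ)
    (hV : ∀ i, MemLp (V i) 2 μ) (hUV : ∀ i j, crossMoment (U i) (V j) μ = 0) :
    momentMatrix (fun i ω => U i ω + V i ω) μ = momentMatrix U μ + momentMatrix V μ := by
  ext i j
  have hj : MemLp (fun ω => U j ω + V j ω) 2 μ := (hU j).add (hV j)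
  have hVU : crossMoment (V i) (U j) μ = 0 := by rw [← star_crossMoment, hUV, star_zero]
  simp only [momentMatrix, Matrix.of_apply, Matrix.add_apply]
  rw [crossMoment_add_left (hU i) (hV i) hj, crossMoment_add_right (hU i) (hU j) (hV j),
    crossMoment_add_right (hV i) (hU j) (hV j), hUV, hVU, add_zero, zero_add]

lemma memLp_dotProduct [Fintype ι] {g : ι → Ω → 𝕜} {p : ENNReal} (hg : ∀ i, MemLp (g i) p μ)
    (a : ι → 𝕜) : MemLp (fun ω => a ⬝ᵥ fun i => g i ω) p μ :=
  memLp_finsetSum _ fun i _ => (hg i).const_mul (a i)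

lemma crossMoment_dotProduct_dotProduct [Fintype ι] {g : ι → Ω → 𝕜}
    (hg : ∀ i, MemLp (g i) 2 μ) (a c : ι → 𝕜) :
    crossMoment (fun ω => a ⬝ᵥ fun i => g i ω) (fun ω => c ⬝ᵥ fun i => g i ω) μ
      = a ⬝ᵥ momentMatrix g μ *ᵥ star c := by
  have hinteg (i j) : Integrable (fun ω => a i * star (c j) * (g i ω * star (g j ω))) μ :=
    (integrable_mul_star (hg i) (hg j)).const_mul _
  calc
    _ = ∫ ω, ∑ i, ∑ j, a i * star (c j) * (g i ω * star (g j ω)) ∂μ := by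
      simp only [crossMoment, dotProduct, star_sum, star_mul', Finset.sum_mul_sum,
        mul_mul_mul_comm]
    _ = ∑ i, ∑ j, a i * star (c j) * crossMoment (g i) (g j) μ := by
      rw [integral_finsetSum _ fun i _ => integrable_finsetSum _ fun j _ => hinteg i j]
      simp_rw [integral_finsetSum _ fun j _ => hinteg _ j, integral_const_mul, crossMoment]
    _ = a ⬝ᵥ momentMatrix g μ *ᵥ star c := by
      simp only [dotProduct, mulVec, momentMatrix, Matrix.of_apply, Pi.star_apply, Finset.mul_sum,
        mul_assoc, mul_comm (star (c _))]

open scoped ComplexOrder in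
lemma posSemidef_momentMatrix [Finite ι] {g : ι → Ω → 𝕜} (hg : ∀ i, MemLp (g i) 2 μ) :
    (momentMatrix g μ).PosSemidef := by
  have := Fintype.ofFinite ι
  refine .of_dotProduct_mulVec_nonneg (isHermitian_momentMatrix g) fun a => ?_
  have h := crossMoment_dotProduct_dotProduct hg (star a) (star a)
  rw [star_star, crossMoment_self] at h
  rw [← h]
  exact RCLike.ofReal_nonneg.2 (integral_nonneg fun ω => sq_nonneg _)

end CrossMoment

section Independence

variable {Ω 𝕜 : Type*} [RCLike 𝕜] {mΩ : MeasurableSpace Ω} {μ : Measure Ω}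

lemma memLp_mul_of_indepFun {U V : Ω → 𝕜} {p : ENNReal} (hp₀ : p ≠ 0) (hp : p ≠ ⊤)
    (hU : MemLp U p μ) (hV : MemLp V p μ) (hUV : IndepFun U V μ) :
    MemLp (fun ω => U ω * V ω) p μ := by
  have hmeas : Measurable fun z : 𝕜 => ‖z‖ ^ p.toReal := by fun_prop
  have hprod : AEStronglyMeasurable (fun ω => U ω * V ω) μ := hU.1.mul hV.1
  rw [← integrable_norm_rpow_iff hprod hp₀ hp]
  simp_rw [norm_mul, Real.mul_rpow (norm_nonneg _) (norm_nonneg _)]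
  exact (hUV.comp hmeas hmeas).integrable_mul ((integrable_norm_rpow_iff hU.1 hp₀ hp).2 hU)
    ((integrable_norm_rpow_iff hV.1 hp₀ hp).2 hV)

lemma measurable_mul_star : Measurable fun p : 𝕜 × 𝕜 => p.1 * star p.2 :=
  (continuous_fst.mul continuous_snd.star).measurable

lemma aestronglyMeasurable_mul_star {U V : Ω → 𝕜} (hU : AEStronglyMeasurable U μ)
    (hV : AEStronglyMeasurable V μ) : AEStronglyMeasurable (fun ω => U ω * star (V ω)) μ :=
  hU.mul hV.star

lemma crossMoment_of_indepFun {U V : Ω → 𝕜} (hU : AEStronglyMeasurable U μ)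
    (hV : AEStronglyMeasurable V μ) (hUV : IndepFun U V μ) :
    crossMoment U V μ = (∫ ω, U ω ∂μ) * star (∫ ω, V ω ∂μ) := by
  have hind : IndepFun U (fun ω => star (V ω)) μ :=
    hUV.comp measurable_id continuous_star.measurable
  rw [crossMoment, hind.integral_fun_mul_eq_mul_integral hU hV.star]
  simp only [RCLike.star_def, integral_conj]

lemma crossMoment_mul_right_of_indepFun {U V W : Ω → 𝕜} (hU : AEStronglyMeasurable U μ)
    (hV : AEStronglyMeasurable V μ) (hW : AEStronglyMeasurable W μ)
    (hind : IndepFun (fun ω => (W ω, U ω)) V μ) :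
    crossMoment W (fun ω => U ω * V ω) μ = crossMoment W U μ * star (∫ ω, V ω ∂μ) := by
  have hWU : IndepFun (fun ω => W ω * star (U ω)) V μ :=
    hind.comp measurable_mul_star measurable_id
  unfold crossMoment
  rw [← crossMoment_of_indepFun (aestronglyMeasurable_mul_star hW hU) hV hWU]
  simp only [crossMoment, star_mul', mul_assoc]

lemma crossMoment_mul_mul_of_indepFun {U U' V V' : Ω → 𝕜} (hU : AEStronglyMeasurable U μ)
    (hU' : AEStronglyMeasurable U' μ) (hV : AEStronglyMeasurable V μ)
    (hV' : AEStronglyMeasurable V' μ)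
    (hind : IndepFun (fun ω => (U ω, U' ω)) (fun ω => (V ω, V' ω)) μ) :
    crossMoment (fun ω => U ω * V ω) (fun ω => U' ω * V' ω) μ
      = crossMoment U U' μ * crossMoment V V' μ := by
  have hprod : IndepFun (fun ω => U ω * star (U' ω)) (fun ω => V ω * star (V' ω)) μ :=
    hind.comp measurable_mul_star measurable_mul_star
  unfold crossMoment
  rw [← hprod.integral_fun_mul_eq_mul_integral (aestronglyMeasurable_mul_star hU hU')
    (aestronglyMeasurable_mul_star hV hV')]
  simp only [star_mul', mul_mul_mul_comm]

lemma comap_pi_le_iSup_comap {ι α : Type*} {𝓧 : ι → Type*} [∀ i, MeasurableSpace (𝓧 i)]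
    (X : ∀ i, Ω → 𝓧 i) (f : α → ι) :
    MeasurableSpace.comap (fun ω a => X (f a) ω) inferInstance
      ≤ ⨆ i ∈ Set.range f, MeasurableSpace.comap (X i) inferInstance := by
  refine Measurable.comap_le (@measurable_pi_lambda _ _ _ (_) _ _ fun a => ?_)
  exact measurable_iff_comap_le.2 <| le_iSup₂_of_le
    (f := fun i (_ : i ∈ Set.range f) => MeasurableSpace.comap (X i) inferInstance)
    (f a) ⟨a, rfl⟩ le_rfl

lemma indepFun_pi_of_forall_ne {ι α β : Type*} {𝓧 : ι → Type*} [∀ i, MeasurableSpace (𝓧 i)]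
    {X : ∀ i, Ω → 𝓧 i} (hX : ∀ i, Measurable (X i)) (hind : iIndepFun X μ)
    {f : α → ι} {g : β → ι} (hfg : ∀ a b, f a ≠ g b) :
    IndepFun (fun ω a => X (f a) ω) (fun ω b => X (g b) ω) μ := by
  have hdisj : Disjoint (Set.range f) (Set.range g) := Set.disjoint_range_iff.2 hfg
  rw [IndepFun_iff_Indep]
  exact indep_of_indep_of_le_left (indep_of_indep_of_le_right
    (indep_iSup_of_disjoint (fun i => (hX i).comap_le) hind.iIndep hdisj)
    (comap_pi_le_iSup_comap X g)) (comap_pi_le_iSup_comap X f)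

end Independence

section ComplexNormal

variable {Ω α : Type*} {mΩ : MeasurableSpace Ω} {μ : Measure Ω}

lemma integral_sq_of_hasLaw_gaussianReal {X : Ω → ℝ} {v : NNReal}
    (hX : HasLaw X (gaussianReal 0 v) μ) : ∫ ω, X ω ^ 2 ∂μ = v := by
  have hmean : ∫ ω, X ω ∂μ = 0 := by rw [hX.integral_eq, integral_id_gaussianReal]
  rw [← variance_of_integral_eq_zero hX.aemeasurable hmean, hX.variance_eq,
    variance_id_gaussianReal]

/-- The real (`false`) and imaginary (`true`) parts of a family of complex random variables, as one
family of real random variables. -/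
def reIm (Z : α → Ω → ℂ) (p : α × Bool) (ω : Ω) : ℝ :=
  if p.2 then (Z p.1 ω).im else (Z p.1 ω).re

/-- The family of complex numbers with prescribed real (`false`) and imaginary (`true`) parts,
inverse to `reIm` pointwise. -/
def ofReIm (r : α × Bool → ℝ) (a : α) : ℂ :=
  ⟨r (a, false), r (a, true)⟩

@[fun_prop]
lemma measurable_ofReIm : Measurable (ofReIm : (α × Bool → ℝ) → α → ℂ) := by
  refine measurable_pi_lambda _ fun a => ?_
  have hpair : Measurable fun r : α × Bool → ℝ => (r (a, false), r (a, true)) := by fun_prop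
  exact Complex.measurableEquivRealProd.symm.measurable.comp hpair

/-- The `Z a` are independent and circularly symmetric complex normal with variances `v a`: all
their real and imaginary parts are independent, those of `Z a` being `N(0, v a / 2)`. -/
structure IsIndepComplexNormal (Z : α → Ω → ℂ) (v : α → NNReal) (μ : Measure Ω) : Prop where
  hasLaw_reIm (p : α × Bool) : HasLaw (reIm Z p) (gaussianReal 0 (v p.1 / 2)) μ
  iIndepFun_reIm : iIndepFun (reIm Z) μ

namespace IsIndepComplexNormal

variable {Z : α → Ω → ℂ} {v : α → NNReal}

lemma hasLaw_re (hZ : IsIndepComplexNormal Z v μ) (a : α) :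
    HasLaw (fun ω => (Z a ω).re) (gaussianReal 0 (v a / 2)) μ :=
  hZ.hasLaw_reIm (a, false)

lemma hasLaw_im (hZ : IsIndepComplexNormal Z v μ) (a : α) :
    HasLaw (fun ω => (Z a ω).im) (gaussianReal 0 (v a / 2)) μ :=
  hZ.hasLaw_reIm (a, true)

lemma memLp (hZ : IsIndepComplexNormal Z v μ) (a : α) : MemLp (Z a) 2 μ :=
  memLp_re_im_iff.1 ⟨(hZ.hasLaw_re a).hasGaussianLaw.memLp_two,
    (hZ.hasLaw_im a).hasGaussianLaw.memLp_two⟩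

lemma integral_eq_zero (hZ : IsIndepComplexNormal Z v μ) (a : α) : ∫ ω, Z a ω ∂μ = 0 := by
  have := hZ.iIndepFun_reIm.isProbabilityMeasure
  rw [← integral_re_add_im (𝕜 := ℂ) ((hZ.memLp a).integrable one_le_two)]
  simp only [RCLike.re_to_complex, RCLike.im_to_complex, (hZ.hasLaw_re a).integral_eq,
    (hZ.hasLaw_im a).integral_eq, integral_id_gaussianReal, map_zero, zero_mul, add_zero]

lemma integral_norm_sq (hZ : IsIndepComplexNormal Z v μ) (a : α) : ∫ ω, ‖Z a ω‖ ^ 2 ∂μ = v a := by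
  have hre := (hZ.hasLaw_re a).hasGaussianLaw.memLp_two.integrable_sq
  have him := (hZ.hasLaw_im a).hasGaussianLaw.memLp_two.integrable_sq
  simp_rw [Complex.sq_norm, Complex.normSq_apply, ← sq]
  rw [integral_add hre him, integral_sq_of_hasLaw_gaussianReal (hZ.hasLaw_re a),
    integral_sq_of_hasLaw_gaussianReal (hZ.hasLaw_im a)]
  push_cast
  ring

lemma indepFun (hZ : IsIndepComplexNormal Z v μ) {a a' : α} (h : a ≠ a') :
    IndepFun (Z a) (Z a') μ := by
  have hne (c c' : Bool) : (a, c) ≠ (a', c') := fun hp => h (congrArg Prod.fst hp)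
  have hmk := Complex.measurableEquivRealProd.symm.measurable
  exact (hZ.iIndepFun_reIm.indepFun_prodMk_prodMk₀ (fun p => (hZ.hasLaw_reIm p).aemeasurable)
    (a, false) (a, true) (a', false) (a', true) (hne _ _) (hne _ _) (hne _ _) (hne _ _)).comp
    hmk hmk

lemma comp_injective {β : Type*} (hZ : IsIndepComplexNormal Z v μ) {f : β → α}
    (hf : f.Injective) : IsIndepComplexNormal (fun b => Z (f b)) (fun b => v (f b)) μ where
  hasLaw_reIm p := hZ.hasLaw_reIm (f p.1, p.2)
  iIndepFun_reIm :=
    hZ.iIndepFun_reIm.precomp (g := Prod.map f id) (hf.prodMap Function.injective_id)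

lemma momentMatrix_eq_diagonal (hZ : IsIndepComplexNormal Z v μ) [DecidableEq α] :
    momentMatrix Z μ = Matrix.diagonal fun a => ((v a : ℝ) : ℂ) := by
  ext a a'
  rw [momentMatrix, Matrix.of_apply, Matrix.diagonal_apply]
  split_ifs with h
  · rw [← h, crossMoment_self, hZ.integral_norm_sq]
    rfl
  · rw [crossMoment_of_indepFun (hZ.memLp a).1 (hZ.memLp a').1 (hZ.indepFun h),
      hZ.integral_eq_zero, zero_mul]

lemma crossMoment_dotProduct (hZ : IsIndepComplexNormal Z v μ) [Fintype α] (a c : α → ℂ) :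
    crossMoment (fun ω => a ⬝ᵥ fun i => Z i ω) (fun ω => c ⬝ᵥ fun i => Z i ω) μ
      = ∑ i, ((v i : ℝ) : ℂ) * (a i * star (c i)) := by
  classical
  rw [crossMoment_dotProduct_dotProduct hZ.memLp, hZ.momentMatrix_eq_diagonal]
  simp only [dotProduct, mulVec_diagonal, Pi.star_apply, mul_left_comm]

end IsIndepComplexNormal

end ComplexNormal

section PhaseDrift

/-- The phase rotation `e^{iφ(s)}` accumulated from the increments `d 1, …, d s`. -/
noncomputable def phaseFactor (d : ℕ → ℝ) (s : ℕ) : ℂ :=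
  Complex.exp (Complex.I * ((∑ u ∈ Finset.Icc 1 s, d u : ℝ) : ℂ))

lemma norm_phaseFactor (d : ℕ → ℝ) (s : ℕ) : ‖phaseFactor d s‖ = 1 := by
  rw [phaseFactor, mul_comm, Complex.norm_exp_ofReal_mul_I]

@[fun_prop]
lemma measurable_phaseFactor (s : ℕ) : Measurable fun d => phaseFactor d s := by
  unfold phaseFactor
  fun_prop

lemma phaseFactor_mul_star_phaseFactor (d : ℕ → ℝ) {s s' : ℕ} (h : s' ≤ s) :
    phaseFactor d s * star (phaseFactor d s')
      = Complex.exp (Complex.I * ((∑ u ∈ Finset.Ioc s' s, d u : ℝ) : ℂ)) := by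
  have hIcc (r : ℕ) : Finset.Icc 1 r = Finset.Ioc 0 r := Finset.Icc_succ_left_eq_Ioc 0 r
  have hsplit := Finset.sum_Ioc_consecutive d (Nat.zero_le s') h
  simp only [phaseFactor, Complex.star_def, ← Complex.exp_conj, map_mul, Complex.conj_I,
    Complex.conj_ofReal, ← Complex.exp_add, hIcc, ← hsplit]
  congr 1
  push_cast
  ring

variable {Ω : Type*} {mΩ : MeasurableSpace Ω} {μ : Measure Ω} {Δ : ℕ → Ω → ℝ}

lemma memLp_phaseFactor [IsFiniteMeasure μ] (hΔ : ∀ u, AEMeasurable (Δ u) μ) (s : ℕ)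
    (p : ENNReal) : MemLp (fun ω => phaseFactor (Δ · ω) s) p μ :=
  .of_bound ((measurable_phaseFactor s).comp_aemeasurable
    (aemeasurable_pi_lambda _ hΔ)).aestronglyMeasurable 1
    (ae_of_all _ fun _ => (norm_phaseFactor _ s).le)

lemma integral_exp_I_mul_sum_gaussian {ι : Type*} {X : ι → Ω → ℝ} {v : NNReal}
    (hlaw : ∀ i, HasLaw (X i) (gaussianReal 0 v) μ) (hind : iIndepFun X μ) (S : Finset ι) :
    ∫ ω, Complex.exp (Complex.I * ((∑ i ∈ S, X i ω : ℝ) : ℂ)) ∂μ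
      = (Real.exp (-(v / 2) * S.card) : ℂ) := by
  have := hind.isProbabilityMeasure
  have hmeas (i : ι) : AEMeasurable (X i) μ := (hlaw i).aemeasurable
  have hchar := congrFun (iIndepFun.charFun_map_fun_finsetSum_eq_prod (P := μ) (s := S) (X := X)
    (fun i _ => hmeas i) (hind.restrict S)) 1
  rw [charFun_apply_real, integral_map (by fun_prop) (by fun_prop), Finset.prod_apply] at hchar
  simp only [Complex.ofReal_one, one_mul, mul_comm _ Complex.I] at hchar
  rw [hchar]
  simp_rw [(hlaw _).map_eq, charFun_gaussianReal]
  rw [Finset.prod_const, ← Complex.exp_nat_mul]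
  push_cast
  ring_nf

lemma crossMoment_phaseFactor {v : NNReal} (hlaw : ∀ u, HasLaw (Δ u) (gaussianReal 0 v) μ)
    (hind : iIndepFun Δ μ) (s s' : ℕ) :
    crossMoment (fun ω => phaseFactor (Δ · ω) s) (fun ω => phaseFactor (Δ · ω) s') μ
      = (Real.exp (-(v / 2) * |(s : ℝ) - s'|) : ℂ) := by
  wlog h : s' ≤ s generalizing s s'
  · rw [← star_crossMoment, this s' s (le_of_not_ge h), Complex.star_def, Complex.conj_ofReal,
      abs_sub_comm]
  have hdist : |(s : ℝ) - s'| = (Finset.Ioc s' s).card := by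
    rw [Nat.card_Ioc, Nat.cast_sub h, abs_of_nonneg (sub_nonneg.2 (Nat.cast_le.2 h))]
  simp only [crossMoment, phaseFactor_mul_star_phaseFactor _ h, hdist]
  exact integral_exp_I_mul_sum_gaussian hlaw hind _

end PhaseDrift

section DistortionGain

variable {ι : Type*} [Fintype ι]

/-- The gain `κ (∑ᵢ |aᵢ|² |hᵢ|²)^{1/2}` with which a receiver distorts symbols `a` sent over
channels `h`. -/
noncomputable def distortionGain (κ : ℝ) (a h : ι → ℂ) : ℂ :=
  (κ : ℂ) * ((Real.sqrt (∑ i, Complex.normSq (a i) * Complex.normSq (h i)) : ℝ) : ℂ)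

@[fun_prop]
lemma measurable_distortionGain (κ : ℝ) (a : ι → ℂ) : Measurable (distortionGain κ a) := by
  have hnormSq : Measurable Complex.normSq := Complex.continuous_normSq.measurable
  unfold distortionGain
  fun_prop

lemma norm_sq_distortionGain (κ : ℝ) (a h : ι → ℂ) :
    ‖distortionGain κ a h‖ ^ 2 = κ ^ 2 * ∑ i, Complex.normSq (a i) * ‖h i‖ ^ 2 := by
  have hsum : 0 ≤ ∑ i, Complex.normSq (a i) * Complex.normSq (h i) :=
    Finset.sum_nonneg fun i _ => mul_nonneg (Complex.normSq_nonneg _) (Complex.normSq_nonneg _)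
  rw [distortionGain, norm_mul, mul_pow, Complex.norm_real, Complex.norm_real, Real.norm_eq_abs,
    Real.norm_eq_abs, sq_abs, sq_abs, Real.sq_sqrt hsum]
  simp only [Complex.sq_norm]

variable {Ω : Type*} {mΩ : MeasurableSpace Ω} {μ : Measure Ω} {h : ι → Ω → ℂ}

lemma integrable_norm_sq_distortionGain (hh : ∀ i, MemLp (h i) 2 μ) (κ : ℝ) (a : ι → ℂ) :
    Integrable (fun ω => ‖distortionGain κ a (h · ω)‖ ^ 2) μ := by
  simp_rw [norm_sq_distortionGain]
  exact (integrable_finsetSum _ fun i _ => ((hh i).integrable_norm_pow two_ne_zero).const_mul _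
    ).const_mul _

lemma memLp_distortionGain (hh : ∀ i, MemLp (h i) 2 μ) (κ : ℝ) (a : ι → ℂ) :
    MemLp (fun ω => distortionGain κ a (h · ω)) 2 μ := by
  have hmeas : AEMeasurable (fun ω i => h i ω) μ :=
    aemeasurable_pi_lambda _ fun i => (hh i).aemeasurable
  exact (memLp_two_iff_integrable_sq_norm ((measurable_distortionGain κ a).comp_aemeasurable
    hmeas).aestronglyMeasurable).2 (integrable_norm_sq_distortionGain hh κ a)

lemma crossMoment_distortionGain_self (hh : ∀ i, MemLp (h i) 2 μ) (κ : ℝ) (a : ι → ℂ) :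
    crossMoment (fun ω => distortionGain κ a (h · ω)) (fun ω => distortionGain κ a (h · ω)) μ
      = (κ : ℂ) ^ 2 * ∑ i, a i * star (a i) * crossMoment (h i) (h i) μ := by
  have hinteg (i : ι) : Integrable (fun ω => ‖h i ω‖ ^ 2) μ :=
    (hh i).integrable_norm_pow two_ne_zero
  simp only [crossMoment_self, norm_sq_distortionGain, integral_const_mul]
  rw [integral_finsetSum _ fun i _ => (hinteg i).const_mul _]
  simp only [integral_const_mul, Complex.star_def, Complex.mul_conj]
  push_cast
  rfl

end DistortionGain

section QuadraticForm

variable {m n R : Type*} [Fintype m] [Fintype n] [DecidableEq n] [CommRing R] [StarRing R]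

lemma dotProduct_mulVec_star_vecMul_inv {A : Matrix n n R} (hA : A.IsHermitian)
    (hdet : IsUnit A.det) (D : Matrix m n R) (u : m → R) :
    u ᵥ* (D * A⁻¹) ⬝ᵥ A *ᵥ star (u ᵥ* (D * A⁻¹)) = u ⬝ᵥ (D * A⁻¹ * Dᴴ) *ᵥ star u := by
  have hcancel : D * A⁻¹ * A * (D * A⁻¹)ᴴ = D * A⁻¹ * Dᴴ := by
    rw [conjTranspose_mul, conjTranspose_nonsing_inv, hA.eq, nonsing_inv_mul_cancel_right _ _ hdet,
      ← Matrix.mul_assoc]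
  rw [dotProduct_mulVec, vecMul_vecMul, star_vecMul, dotProduct_mulVec, vecMul_vecMul, hcancel,
    ← dotProduct_mulVec]

end QuadraticForm

section PilotMatrices

variable {B L K : ℕ} {x : Fin L → Fin K → Fin B → ℂ}

/-- The symbols which all users of all cells send at pilot time `b + 1`. -/
def pilotSymbols (x : Fin L → Fin K → Fin B → ℂ) (b : Fin B) (p : Fin L × Fin K) : ℂ :=
  x p.1 p.2 b

/-- The covariance matrix `∑_{l,m} λ_{lm} x̃_{lm} x̃_{lm}ᴴ` of the pilot signal received over
distortion-free channels without phase drift. -/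
noncomputable def pilotCovariance (lam : Fin L → Fin K → ℝ) (x : Fin L → Fin K → Fin B → ℂ) :
    Matrix (Fin B) (Fin B) ℂ :=
  Matrix.of fun b b' => ∑ p : Fin L × Fin K,
    (lam p.1 p.2 : ℂ) * (pilotSymbols x b p * star (pilotSymbols x b' p))

/-- The correlations `e^{-δ|b-b'|/2}` between the phase rotations at pilot times `b` and `b'`. -/
noncomputable def phaseCorrelation (δ : ℝ) (B : ℕ) : Matrix (Fin B) (Fin B) ℂ :=
  Matrix.of fun b b' => (Real.exp (-(δ / 2) * |((b : ℕ) : ℝ) - ((b' : ℕ) : ℝ)|) : ℂ)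

lemma PsiMat_eq_hadamard_add (lam : Fin L → Fin K → ℝ) (σ2 ξ κ δ : ℝ)
    (x : Fin L → Fin K → Fin B → ℂ) :
    PsiMat lam σ2 ξ κ δ x = phaseCorrelation δ B ⊙ pilotCovariance lam x
      + (κ : ℂ) ^ 2 • Matrix.diagonal (pilotCovariance lam x).diag
      + ((σ2 * ξ : ℝ) : ℂ) • 1 := by
  have hX (xv : Fin B → ℂ) (b b' : Fin B) : Xmat κ δ xv b b'
      = phaseCorrelation δ B b b' * (xv b * star (xv b'))
        + if b = b' then (κ : ℂ) ^ 2 * (xv b * star (xv b)) else 0 := by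
    rcases eq_or_ne b b' with rfl | h
    · simp only [Xmat, phaseCorrelation, Matrix.of_apply, if_true, sub_self, abs_zero, mul_zero,
        Real.exp_zero, Complex.star_def, Complex.mul_conj]
      push_cast
      ring
    · simp only [Xmat, phaseCorrelation, Matrix.of_apply, if_neg h, add_zero, mul_comm]
  rw [PsiMat]
  congr 1
  ext b b'
  simp only [Matrix.sum_apply, Matrix.smul_apply, smul_eq_mul, hX, Matrix.add_apply,
    Matrix.hadamard_apply, Matrix.diagonal_apply, Matrix.diag_apply, pilotCovariance,
    pilotSymbols, Matrix.of_apply, mul_ite, mul_zero, ← Fintype.sum_prod_type', mul_add,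
    Finset.sum_add_distrib, Finset.mul_sum]
  split_ifs <;> simp only [Finset.sum_const_zero, mul_left_comm]

end PilotMatrices

namespace MIMOModel

variable {Ω : Type*} [MeasureSpace Ω] {N B L K : ℕ} {lam : Fin L → Fin K → ℝ}
  {σ2 ξ κ δ : ℝ} {x : Fin L → Fin K → Fin B → ℂ}

/-- The indices of the real random sources of the model, in the order in which the field
`MIMOModel.indep` lists them: channels, phase drift increments, distortion and noise. -/
abbrev SourceIndex (N L K : ℕ) : Type :=
  (Fin L × Fin K × Fin N × Bool) ⊕ (Fin N × ℕ) ⊕ (Fin N × ℕ × Bool) ⊕ (Fin N × ℕ × Bool)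

variable (M : MIMOModel Ω N B L K lam σ2 ξ κ δ x)

/-- The family of all real random sources of the model. -/
def source (i : SourceIndex N L K) : Ω → ℝ :=
  match i with
  | Sum.inl (l, k, n, false) => M.hRe l k n
  | Sum.inl (l, k, n, true) => M.hIm l k n
  | Sum.inr (Sum.inl (n, u)) => M.dphi n u
  | Sum.inr (Sum.inr (Sum.inl (n, s, false))) => M.zRe n s
  | Sum.inr (Sum.inr (Sum.inl (n, s, true))) => M.zIm n s
  | Sum.inr (Sum.inr (Sum.inr (n, s, false))) => M.etaRe n s
  | Sum.inr (Sum.inr (Sum.inr (n, s, true))) => M.etaIm n s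

lemma iIndepFun_source : iIndepFun M.source (ℙ : Measure Ω) :=
  M.indep

lemma measurable_source (i : SourceIndex N L K) : Measurable (M.source i) := by
  rcases i with ⟨l, k, n, _ | _⟩ | ⟨n, u⟩ | ⟨n, s, _ | _⟩ | ⟨n, s, _ | _⟩
  exacts [M.meas_hRe l k n, M.meas_hIm l k n, M.meas_dphi n u, M.meas_zRe n s, M.meas_zIm n s,
    M.meas_etaRe n s, M.meas_etaIm n s]

/-- The coefficients of the channels from all users to antenna `n`. -/
noncomputable def channel (n : Fin N) (p : Fin L × Fin K) (ω : Ω) : ℂ :=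
  M.ch p.1 p.2 n ω

lemma isIndepComplexNormal_of_source {α : Type*} {Z : α → Ω → ℂ} {v : α → ℝ}
    {e : α × Bool → SourceIndex N L K} (he : e.Injective) (hZ : ∀ p, reIm Z p = M.source (e p))
    (hlaw : ∀ p, (ℙ : Measure Ω).map (reIm Z p) = gaussianReal 0 (Real.toNNReal (v p.1 / 2))) :
    IsIndepComplexNormal Z (fun a => (v a).toNNReal) (ℙ : Measure Ω) where
  hasLaw_reIm p :=
    { aemeasurable := hZ p ▸ (M.measurable_source (e p)).aemeasurable
      map_eq := by rw [hlaw, Real.toNNReal_div' zero_le_two, Real.toNNReal_ofNat] }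
  iIndepFun_reIm := by
    rw [funext hZ]
    exact M.iIndepFun_source.precomp he

lemma isIndepComplexNormal_channel (n : Fin N) :
    IsIndepComplexNormal (M.channel n) (fun p => (lam p.1 p.2).toNNReal) (ℙ : Measure Ω) := by
  refine M.isIndepComplexNormal_of_source (v := fun p => lam p.1 p.2)
    (e := fun p : (Fin L × Fin K) × Bool => Sum.inl (p.1.1, p.1.2, n, p.2)) ?_ ?_ ?_
  · rintro ⟨⟨l, k⟩, c⟩ ⟨⟨l', k'⟩, c'⟩ h
    simpa [and_assoc] using h
  · rintro ⟨p, _ | _⟩ <;> rfl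
  · rintro ⟨p, _ | _⟩
    exacts [M.law_hRe p.1 p.2 n, M.law_hIm p.1 p.2 n]

lemma isIndepComplexNormal_z (n : Fin N) :
    IsIndepComplexNormal (M.z n) (fun _ => (1 : ℝ).toNNReal) (ℙ : Measure Ω) := by
  refine M.isIndepComplexNormal_of_source
    (e := fun p => Sum.inr (Sum.inr (Sum.inl (n, p.1, p.2)))) ?_ ?_ ?_
  · rintro ⟨s, c⟩ ⟨s', c'⟩ h
    simpa using h
  · rintro ⟨s, _ | _⟩ <;> rfl
  · rintro ⟨s, _ | _⟩
    exacts [M.law_zRe n s, M.law_zIm n s]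

lemma isIndepComplexNormal_eta (n : Fin N) :
    IsIndepComplexNormal (M.eta n) (fun _ => (σ2 * ξ).toNNReal) (ℙ : Measure Ω) := by
  refine M.isIndepComplexNormal_of_source
    (e := fun p => Sum.inr (Sum.inr (Sum.inr (n, p.1, p.2)))) ?_ ?_ ?_
  · rintro ⟨s, c⟩ ⟨s', c'⟩ h
    simpa using h
  · rintro ⟨s, _ | _⟩ <;> rfl
  · rintro ⟨s, _ | _⟩
    exacts [M.law_etaRe n s, M.law_etaIm n s]

lemma hasLaw_dphi (n : Fin N) (u : ℕ) : HasLaw (M.dphi n u) (gaussianReal 0 δ.toNNReal) where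
  aemeasurable := (M.meas_dphi n u).aemeasurable
  map_eq := M.law_dphi n u

lemma iIndepFun_dphi (n : Fin N) : iIndepFun (M.dphi n) (ℙ : Measure Ω) :=
  M.iIndepFun_source.precomp (g := fun u => Sum.inr (Sum.inl (n, u)))
    fun u u' h => by simpa using h

lemma indepFun_dphi_channel (n : Fin N) :
    IndepFun (fun ω u => M.dphi n u ω) (fun ω p => M.channel n p ω) (ℙ : Measure Ω) :=
  (indepFun_pi_of_forall_ne M.measurable_source M.iIndepFun_source
    (f := fun u : ℕ => Sum.inr (Sum.inl (n, u)))
    (g := fun p : (Fin L × Fin K) × Bool => Sum.inl (p.1.1, p.1.2, n, p.2))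
    fun _ _ => Sum.inr_ne_inl).comp measurable_id measurable_ofReIm

lemma indepFun_dphi_channel_z (n : Fin N) :
    IndepFun (fun ω => (fun u => M.dphi n u ω, fun p => M.channel n p ω)) (fun ω s => M.z n s ω)
      (ℙ : Measure Ω) := by
  have hsplit : Measurable fun r : ℕ ⊕ (Fin L × Fin K) × Bool → ℝ =>
      (fun u => r (Sum.inl u), ofReIm fun p => r (Sum.inr p)) := by fun_prop
  exact (indepFun_pi_of_forall_ne M.measurable_source M.iIndepFun_source
    (f := Sum.elim (fun u : ℕ => Sum.inr (Sum.inl (n, u)))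
      fun p : (Fin L × Fin K) × Bool => Sum.inl (p.1.1, p.1.2, n, p.2))
    (g := fun p : ℕ × Bool => Sum.inr (Sum.inr (Sum.inl (n, p.1, p.2))))
    (by rintro (_ | _) _ <;> simp)).comp hsplit measurable_ofReIm

lemma indepFun_dphi_channel_z_eta (n : Fin N) :
    IndepFun (fun ω => (fun u => M.dphi n u ω, fun p => M.channel n p ω, fun s => M.z n s ω))
      (fun ω s => M.eta n s ω) (ℙ : Measure Ω) := by
  have hsplit : Measurable fun r : ℕ ⊕ (Fin L × Fin K) × Bool ⊕ ℕ × Bool → ℝ =>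
      (fun u => r (Sum.inl u), ofReIm fun p => r (Sum.inr (Sum.inl p)),
        ofReIm fun p => r (Sum.inr (Sum.inr p))) := by fun_prop
  exact (indepFun_pi_of_forall_ne M.measurable_source M.iIndepFun_source
    (f := Sum.elim (fun u : ℕ => Sum.inr (Sum.inl (n, u))) <| Sum.elim
      (fun p : (Fin L × Fin K) × Bool => Sum.inl (p.1.1, p.1.2, n, p.2))
      fun p : ℕ × Bool => Sum.inr (Sum.inr (Sum.inl (n, p.1, p.2))))
    (g := fun p : ℕ × Bool => Sum.inr (Sum.inr (Sum.inr (n, p.1, p.2))))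
    (by rintro (_ | _ | _) _ <;> simp)).comp hsplit measurable_ofReIm

/-- The pilot signal at antenna `n`, rotated by the phase drift but without distortion and
noise. -/
noncomputable def signal (n : Fin N) (b : Fin B) (ω : Ω) : ℂ :=
  phaseFactor (M.dphi n · ω) (b + 1) * (pilotSymbols x b ⬝ᵥ fun p => M.channel n p ω)

/-- The hardware distortion of the pilot signal at antenna `n`. -/
noncomputable def distortion (n : Fin N) (b : Fin B) (ω : Ω) : ℂ :=
  distortionGain κ (pilotSymbols x b) (M.channel n · ω) * M.z n (b + 1) ω

lemma y_eq_signal_add_distortion_add_eta (n : Fin N) :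
    M.y n = fun b ω => (M.signal n b ω + M.distortion n b ω) + M.eta n (b + 1) ω := by
  funext b ω
  simp only [y, signal, distortion, phaseFactor, distortionGain, phase, channel, pilotSymbols,
    dotProduct, Fintype.sum_prod_type, mul_comm (M.ch _ _ _ _)]

lemma memLp_signal (n : Fin N) (b : Fin B) : MemLp (M.signal n b) 2 (ℙ : Measure Ω) := by
  have := M.iIndepFun_source.isProbabilityMeasure
  have hdot : Measurable fun h : Fin L × Fin K → ℂ => pilotSymbols x b ⬝ᵥ h := by
    unfold dotProduct
    fun_prop
  exact memLp_mul_of_indepFun two_ne_zero ENNReal.ofNat_ne_top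
    (memLp_phaseFactor (fun u => (M.meas_dphi n u).aemeasurable) _ _)
    (memLp_dotProduct (M.isIndepComplexNormal_channel n).memLp _)
    ((M.indepFun_dphi_channel n).comp (measurable_phaseFactor _) hdot)

lemma momentMatrix_signal (hlam : ∀ l k, 0 ≤ lam l k) (hδ : 0 ≤ δ) (n : Fin N) :
    momentMatrix (M.signal n) ℙ = phaseCorrelation δ B ⊙ pilotCovariance lam x := by
  ext b b'
  have := M.iIndepFun_source.isProbabilityMeasure
  have hphase (s : ℕ) : AEStronglyMeasurable (fun ω => phaseFactor (M.dphi n · ω) s) ℙ :=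
    (memLp_phaseFactor (fun u => (M.meas_dphi n u).aemeasurable) s 2).1
  have hh := M.isIndepComplexNormal_channel n
  have hdot (b : Fin B) := (memLp_dotProduct hh.memLp (pilotSymbols x b)).1
  have hind : IndepFun
      (fun ω => (phaseFactor (M.dphi n · ω) (b + 1), phaseFactor (M.dphi n · ω) (b' + 1)))
      (fun ω => (pilotSymbols x b ⬝ᵥ fun p => M.channel n p ω,
        pilotSymbols x b' ⬝ᵥ fun p => M.channel n p ω)) (ℙ : Measure Ω) := by
    have hphases : Measurable fun d : ℕ → ℝ =>
        (phaseFactor d (b + 1), phaseFactor d (b' + 1)) := by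
      fun_prop
    have hdots : Measurable fun h : Fin L × Fin K → ℂ =>
        (pilotSymbols x b ⬝ᵥ h, pilotSymbols x b' ⬝ᵥ h) := by
      unfold dotProduct
      fun_prop
    exact (M.indepFun_dphi_channel n).comp hphases hdots
  rw [momentMatrix, Matrix.of_apply, Matrix.hadamard_apply]
  unfold signal
  rw [crossMoment_mul_mul_of_indepFun (hphase _) (hphase _) (hdot b) (hdot b') hind,
    crossMoment_phaseFactor (M.hasLaw_dphi n) (M.iIndepFun_dphi n), hh.crossMoment_dotProduct]
  simp only [phaseCorrelation, pilotCovariance, Matrix.of_apply, Real.coe_toNNReal _ (hlam _ _),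
    Real.coe_toNNReal _ hδ, Nat.cast_add, Nat.cast_one, add_sub_add_right_eq_sub]

lemma memLp_distortion (n : Fin N) (b : Fin B) : MemLp (M.distortion n b) 2 (ℙ : Measure Ω) :=
  memLp_mul_of_indepFun two_ne_zero ENNReal.ofNat_ne_top
    (memLp_distortionGain (M.isIndepComplexNormal_channel n).memLp κ (pilotSymbols x b))
    ((M.isIndepComplexNormal_z n).memLp _)
    ((M.indepFun_dphi_channel_z n).comp
      ((measurable_distortionGain κ (pilotSymbols x b)).comp measurable_snd)
      (measurable_pi_apply ((b : ℕ) + 1)))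

lemma momentMatrix_distortion (hlam : ∀ l k, 0 ≤ lam l k) (n : Fin N) :
    momentMatrix (M.distortion n) ℙ
      = (κ : ℂ) ^ 2 • Matrix.diagonal (pilotCovariance lam x).diag := by
  ext b b'
  have hh := M.isIndepComplexNormal_channel n
  have hz := M.isIndepComplexNormal_z n
  have hgain (b : Fin B) := (memLp_distortionGain hh.memLp κ (pilotSymbols x b)).1
  have hind : IndepFun
      (fun ω => (distortionGain κ (pilotSymbols x b) (M.channel n · ω),
        distortionGain κ (pilotSymbols x b') (M.channel n · ω)))
      (fun ω => (M.z n (b + 1) ω, M.z n (b' + 1) ω)) (ℙ : Measure Ω) := by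
    have hgains : Measurable fun q : (ℕ → ℝ) × (Fin L × Fin K → ℂ) =>
        (distortionGain κ (pilotSymbols x b) q.2, distortionGain κ (pilotSymbols x b') q.2) := by
      fun_prop
    have hzs : Measurable fun r : ℕ → ℂ => (r (b + 1), r (b' + 1)) := by fun_prop
    exact (M.indepFun_dphi_channel_z n).comp hgains hzs
  have hzz : crossMoment (M.z n (b + 1)) (M.z n (b' + 1)) ℙ
      = momentMatrix (M.z n) ℙ (b + 1) (b' + 1) := rfl
  rw [momentMatrix, Matrix.of_apply]
  unfold distortion
  rw [crossMoment_mul_mul_of_indepFun (hgain b) (hgain b') (hz.memLp _).1 (hz.memLp _).1 hind,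
    hzz, hz.momentMatrix_eq_diagonal]
  rcases eq_or_ne b b' with rfl | h
  · have hhh (p : Fin L × Fin K) : crossMoment (M.channel n p) (M.channel n p) ℙ
        = (lam p.1 p.2 : ℂ) := by
      rw [crossMoment_self, hh.integral_norm_sq, Real.coe_toNNReal _ (hlam _ _)]
      rfl
    rw [crossMoment_distortionGain_self hh.memLp]
    simp [hhh, pilotCovariance, mul_comm]
  · have h' : (b : ℕ) ≠ b' := Fin.val_ne_of_ne h
    simp [h, h']

lemma momentMatrix_eta (hnoise : 0 ≤ σ2 * ξ) (n : Fin N) :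
    momentMatrix (fun b : Fin B => M.eta n (b + 1)) ℙ = ((σ2 * ξ : ℝ) : ℂ) • 1 := by
  have hinj : Function.Injective fun b : Fin B => (b : ℕ) + 1 :=
    (add_left_injective 1).comp Fin.val_injective
  rw [((M.isIndepComplexNormal_eta n).comp_injective hinj).momentMatrix_eq_diagonal,
    Real.coe_toNNReal _ hnoise, Matrix.smul_one_eq_diagonal]

lemma crossMoment_signal_distortion (n : Fin N) (b b' : Fin B) :
    crossMoment (M.signal n b) (M.distortion n b') ℙ = 0 := by
  have hz := M.isIndepComplexNormal_z n
  have hgain := memLp_distortionGain (M.isIndepComplexNormal_channel n).memLp κ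
    (pilotSymbols x b')
  have hind : IndepFun
      (fun ω => (M.signal n b ω, distortionGain κ (pilotSymbols x b') (M.channel n · ω)))
      (M.z n (b' + 1)) (ℙ : Measure Ω) := by
    have hpair : Measurable fun q : (ℕ → ℝ) × (Fin L × Fin K → ℂ) =>
        (phaseFactor q.1 (b + 1) * (pilotSymbols x b ⬝ᵥ q.2),
          distortionGain κ (pilotSymbols x b') q.2) := by
      unfold dotProduct
      fun_prop
    exact (M.indepFun_dphi_channel_z n).comp hpair (measurable_pi_apply ((b' : ℕ) + 1))
  unfold distortion
  rw [crossMoment_mul_right_of_indepFun hgain.1 (hz.memLp _).1 (M.memLp_signal n b).1 hind,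
    hz.integral_eq_zero, star_zero, mul_zero]

lemma memLp_signal_add_distortion (n : Fin N) (b : Fin B) :
    MemLp (fun ω => M.signal n b ω + M.distortion n b ω) 2 (ℙ : Measure Ω) :=
  (M.memLp_signal n b).add (M.memLp_distortion n b)

lemma crossMoment_signal_add_distortion_eta (n : Fin N) (b b' : Fin B) :
    crossMoment (fun ω => M.signal n b ω + M.distortion n b ω) (M.eta n (b' + 1)) ℙ = 0 := by
  have heta := M.isIndepComplexNormal_eta n
  have hind : IndepFun (fun ω => M.signal n b ω + M.distortion n b ω) (M.eta n (b' + 1))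
      (ℙ : Measure Ω) := by
    have hsum : Measurable fun q : (ℕ → ℝ) × (Fin L × Fin K → ℂ) × (ℕ → ℂ) =>
        phaseFactor q.1 (b + 1) * (pilotSymbols x b ⬝ᵥ q.2.1)
          + distortionGain κ (pilotSymbols x b) q.2.1 * q.2.2 (b + 1) := by
      unfold dotProduct
      fun_prop
    exact (M.indepFun_dphi_channel_z_eta n).comp hsum (measurable_pi_apply ((b' : ℕ) + 1))
  rw [crossMoment_of_indepFun (M.memLp_signal_add_distortion n b).1
    (heta.memLp _).1 hind, heta.integral_eq_zero, star_zero, mul_zero]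

lemma memLp_y (n : Fin N) (b : Fin B) : MemLp (M.y n b) 2 (ℙ : Measure Ω) := by
  rw [M.y_eq_signal_add_distortion_add_eta]
  exact (M.memLp_signal_add_distortion n b).add
    ((M.isIndepComplexNormal_eta n).memLp _)

lemma memLp_hHat (l : Fin L) (k : Fin K) (t : ℕ) (n : Fin N) :
    MemLp (M.hHat l k t n) 2 (ℙ : Measure Ω) :=
  (memLp_dotProduct (M.memLp_y n) _).const_mul _

lemma momentMatrix_y_eq_add (hnoise : 0 ≤ σ2 * ξ) (n : Fin N) :
    momentMatrix (M.y n) ℙ = momentMatrix (fun b ω => M.signal n b ω + M.distortion n b ω) ℙ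
      + ((σ2 * ξ : ℝ) : ℂ) • 1 := by
  rw [M.y_eq_signal_add_distortion_add_eta, momentMatrix_add_of_orthogonal
    (M.memLp_signal_add_distortion n)
    (fun b => (M.isIndepComplexNormal_eta n).memLp _)
    (M.crossMoment_signal_add_distortion_eta n), M.momentMatrix_eta hnoise]

lemma momentMatrix_y (hlam : ∀ l k, 0 ≤ lam l k) (hnoise : 0 ≤ σ2 * ξ) (hδ : 0 ≤ δ)
    (n : Fin N) : momentMatrix (M.y n) ℙ = PsiMat lam σ2 ξ κ δ x := by
  rw [M.momentMatrix_y_eq_add hnoise, momentMatrix_add_of_orthogonal (M.memLp_signal n)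
    (M.memLp_distortion n) (M.crossMoment_signal_distortion n), M.momentMatrix_signal hlam hδ,
    M.momentMatrix_distortion hlam, PsiMat_eq_hadamard_add]

open scoped ComplexOrder in
lemma isUnit_det_momentMatrix_y (hnoise : 0 < σ2 * ξ) (n : Fin N) :
    IsUnit (momentMatrix (M.y n) ℙ).det := by
  have hpos : (momentMatrix (M.y n) ℙ).PosDef := by
    rw [M.momentMatrix_y_eq_add hnoise.le]
    exact Matrix.PosDef.posSemidef_add (posSemidef_momentMatrix (M.memLp_signal_add_distortion n))
      (Matrix.PosDef.one.smul (Complex.zero_lt_real.2 hnoise))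
  exact (Matrix.isUnit_iff_isUnit_det _).1 hpos.isUnit

lemma integral_normSq_hHat (hlam : ∀ l k, 0 ≤ lam l k) (hnoise : 0 < σ2 * ξ) (hδ : 0 ≤ δ)
    (j : Fin L) (k : Fin K) (t : ℕ) (n : Fin N) :
    ((∫ ω, Complex.normSq (M.hHat j k t n ω) : ℝ) : ℂ)
      = ((lam j k : ℝ) : ℂ) ^ 2 * (star (x j k) ⬝ᵥ (Dmat δ t B * (PsiMat lam σ2 ξ κ δ x)⁻¹
          * (Dmat δ t B)ᴴ) *ᵥ x j k) := by
  set c := star (x j k) ᵥ* (Dmat δ t B * (PsiMat lam σ2 ξ κ δ x)⁻¹) with hc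
  have hherm := isHermitian_momentMatrix (μ := ℙ) (M.y n)
  have hdet := M.isUnit_det_momentMatrix_y hnoise n
  have hestimate (ω : Ω) : Complex.normSq (M.hHat j k t n ω)
      = lam j k ^ 2 * ‖c ⬝ᵥ fun b => M.y n b ω‖ ^ 2 := by
    rw [hHat, Complex.normSq_mul, Complex.normSq_ofReal, ← sq, Complex.sq_norm]
    rfl
  have hmoment : ((∫ ω, ‖c ⬝ᵥ fun b => M.y n b ω‖ ^ 2 : ℝ) : ℂ)
      = c ⬝ᵥ momentMatrix (M.y n) ℙ *ᵥ star c :=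
    (crossMoment_self _).symm.trans (crossMoment_dotProduct_dotProduct (M.memLp_y n) c c)
  rw [M.momentMatrix_y hlam hnoise.le hδ] at hherm hdet hmoment
  simp_rw [hestimate, integral_const_mul, Complex.ofReal_mul, hmoment, hc,
    dotProduct_mulVec_star_vecMul_inv hherm hdet, star_star, Complex.ofReal_pow]

end MIMOModel

theorem mrc_squared_norm_general
    {Ω : Type*} [MeasureSpace Ω] {N B L K : ℕ} {lam : Fin L → Fin K → ℝ} {σ2 ξ κ δ : ℝ}
    {x : Fin L → Fin K → Fin B → ℂ} (M : MIMOModel Ω N B L K lam σ2 ξ κ δ x)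
    (hlam : ∀ l k, 0 ≤ lam l k) (hnoise : 0 < σ2 * ξ) (hδ : 0 ≤ δ) (t : ℕ) (j : Fin L)
    (k : Fin K) :
    ((∫ ω, ∑ n, Complex.normSq (M.hHat j k t n ω) : ℝ) : ℂ)
      = (N : ℂ) * ((lam j k : ℝ) : ℂ) ^ 2
        * (star (x j k) ⬝ᵥ (Dmat δ t B * (PsiMat lam σ2 ξ κ δ x)⁻¹
            * (Dmat δ t B)ᴴ).mulVec (x j k)) := by
  have hinteg (n : Fin N) : Integrable (fun ω => Complex.normSq (M.hHat j k t n ω)) := by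
    simp_rw [Complex.normSq_eq_norm_sq]
    exact (M.memLp_hHat j k t n).integrable_norm_pow two_ne_zero
  rw [integral_finsetSum _ fun n _ => hinteg n, Complex.ofReal_sum]
  simp_rw [M.integral_normSq_hHat hlam hnoise hδ]
  rw [Finset.sum_const, Finset.card_univ, Fintype.card_fin, nsmul_eq_mul, ← mul_assoc]

/-- **Squared norm of the MRC filter (Theorem 2, eq. (9)).** With the MRC filter
`v_{jk}(t) = ĥ_{jjk}(t)`,
`E[‖v_{jk}(t)‖²] = N λ_{jjk}² x̃_{jk}ᴴ D_{δ(t)} Ψ_j⁻¹ D_{δ(t)}ᴴ x̃_{jk}`. -/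
theorem mrc_squared_norm
    {Ω : Type*} [MeasureSpace Ω] [IsProbabilityMeasure (ℙ : Measure Ω)]
    {N B L K : ℕ} {lam : Fin L → Fin K → ℝ} {σ2 ξ κ δ : ℝ}
    {x : Fin L → Fin K → Fin B → ℂ}
    (M : MIMOModel Ω N B L K lam σ2 ξ κ δ x)
    (hlam : ∀ l k, 0 < lam l k) (hσ2 : 0 < σ2) (hξ : 1 ≤ ξ) (hκ : 0 ≤ κ) (hδ : 0 ≤ δ)
    (t : ℕ) (ht : B < t) (j : Fin L) :
    ∀ k : Fin K,
      ((∫ ω, ∑ n, Complex.normSq (M.hHat j k t n ω) : ℝ) : ℂ)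
        = (N : ℂ) * ((lam j k : ℝ) : ℂ) ^ 2
          * (star (x j k) ⬝ᵥ (Dmat δ t B * (PsiMat lam σ2 ξ κ δ x)⁻¹
              * (Dmat δ t B)ᴴ).mulVec (x j k)) := by
  exact fun k => mrc_squared_norm_general M (fun l k => (hlam l k).le)
    (mul_pos hσ2 (one_pos.trans_le hξ)) hδ t j k
end

section
/- Under the system model with MRC and transmit powers p_{lm} > 0, fix k ∈ {1,…,K} and fix all parameters except N. Write A_{lm} = x̃_{jk}ᴴ D_{δ(t)} Ψ_j⁻¹ D_{δ(t)}ᴴ x̃_{lm} (so A_{jk} > 0 when x̃_{jk} ≠ 0, since Ψ_j is positive definite and D_{δ(t)} is invertible). Assume x̃_{jk} ≠ 0 and that the pilot-contamination constant Σ_{(l,m)≠(j,k)} p_{lm} λ_{jlm}² |A_{lm}|² is strictly positive. Then, as N → ∞, SINR_{jk}(t; N) converges to p_{jk} λ_{jjk}² A_{jk}² / ( Σ_{(l,m)≠(j,k)} p_{lm} λ_{jlm}² |A_{lm}|² ); in particular the distortion-noise and receiver-noise contributions vanish and only pilot contamination limits the asymptotic SINR. -/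
open MeasureTheory ProbabilityTheory Matrix Complex
open scoped ProbabilityTheory Kronecker

/-!
The antennas are independent copies of one antenna, and the filter coefficient at antenna `n` is, up
to the constant factor `λ_{jjk}`, a fixed linear function of the pilot signals received there. Hence
every inner product of the filter with an effective channel or with the distortion noise is a sum of
`N` i.i.d. variables `F_n`, with second moment `N² |E F|² + N Var F`. Reversing the sign of a single
channel coefficient shows that `E F = λ_{jlm} conj A_{lm}` for the channel of user `m` in cell `l`;
reversing the sign of the distortion variable at time `t`, which is not a pilot time, gives
`E F = 0` for the distortion noise. After division by `N²` only the coherent terms `|E F|²` survive.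
-/

lemma tendsto_sq_mul_div_sq_mul_add {b : ℝ} (hb : b ≠ 0) (a c : ℝ) :
    Filter.Tendsto (fun N : ℕ => (N : ℝ) ^ 2 * a / ((N : ℝ) ^ 2 * b + N * c)) Filter.atTop
      (nhds (a / b)) := by
  have hden : Filter.Tendsto (fun N : ℕ => b + c / (N : ℝ)) Filter.atTop (nhds b) := by
    simpa only [add_zero] using
      tendsto_const_nhds.add (tendsto_const_div_atTop_nhds_zero_nat c)
  refine (tendsto_const_nhds.div hden hb).congr' ?_
  filter_upwards [Filter.eventually_ne_atTop 0] with N hN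
  have hN' : (N : ℝ) ≠ 0 := Nat.cast_ne_zero.2 hN
  have hscale : (N : ℝ) ^ 2 * b + N * c = (N : ℝ) ^ 2 * (b + c / N) := by field_simp
  rw [hscale, mul_div_mul_left _ _ (pow_ne_zero 2 hN'), Pi.div_apply]

lemma isHermitian_Xmat {B : ℕ} (κ δ : ℝ) (v : Fin B → ℂ) : (Xmat κ δ v).IsHermitian := by
  ext b₁ b₂
  by_cases h : b₁ = b₂
  · simp [Xmat, h]
  · simp only [Xmat, conjTranspose_apply, of_apply, h, Ne.symm h, if_false, star_mul',
      abs_sub_comm, star_def, conj_ofReal]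
    rw [conj_conj]
    ring

lemma isHermitian_PsiMat {B L K : ℕ} (lam : Fin L → Fin K → ℝ) (σ2 ξ κ δ : ℝ)
    (x : Fin L → Fin K → Fin B → ℂ) : (PsiMat lam σ2 ξ κ δ x).IsHermitian := by
  rw [IsHermitian, PsiMat]
  simp only [conjTranspose_add, conjTranspose_sum, conjTranspose_smul, (isHermitian_Xmat _ _ _).eq,
    conjTranspose_one, star_def, conj_ofReal]

lemma conjTranspose_Dmat (δ : ℝ) (t B : ℕ) : (Dmat δ t B)ᴴ = Dmat δ t B := by
  simp only [Dmat, diagonal_conjTranspose]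
  congr 1
  ext b
  exact conj_ofReal _

lemma ofReal_normSq_eq_sq_of_im_eq_zero {a : ℂ} (ha : a.im = 0) : (normSq a : ℂ) = a ^ 2 := by
  rw [← mul_conj, conj_eq_iff_im.2 ha, sq]

/-- All moments of `X` are finite. The exponent `⊤` is left out because Gaussian variables are not
essentially bounded. -/
@[fun_prop]
def HasFiniteMoments {Ω E : Type*} [MeasurableSpace Ω] [NormedAddCommGroup E]
    (X : Ω → E) (μ : Measure Ω) : Prop :=
  ∀ p : ENNReal, p ≠ ⊤ → MemLp X p μ

namespace HasFiniteMoments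

variable {Ω Ω' E F : Type*} [MeasurableSpace Ω] [MeasurableSpace Ω'] [NormedAddCommGroup E]
  [NormedAddCommGroup F] {μ : Measure Ω} {ν : Measure Ω'}

lemma memLp_two {X : Ω → E} (hX : HasFiniteMoments X μ) : MemLp X 2 μ :=
  hX 2 ENNReal.ofNat_ne_top

lemma integrable {X : Ω → E} (hX : HasFiniteMoments X μ) : Integrable X μ :=
  memLp_one_iff_integrable.1 (hX 1 ENNReal.one_ne_top)

lemma comp_measurePreserving {X : Ω' → E} {T : Ω → Ω'} (hX : HasFiniteMoments X ν)
    (hT : MeasurePreserving T μ ν) : HasFiniteMoments (fun ω => X (T ω)) μ :=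
  fun p hp => (hX p hp).comp_measurePreserving hT

lemma mono {X : Ω → E} {Y : Ω → F} (hX : HasFiniteMoments X μ) (hY : AEStronglyMeasurable Y μ)
    (h : ∀ ω, ‖Y ω‖ ≤ ‖X ω‖) : HasFiniteMoments Y μ :=
  fun p hp => (hX p hp).of_le hY (.of_forall h)

@[fun_prop]
lemma const [IsFiniteMeasure μ] (c : E) : HasFiniteMoments (fun _ : Ω => c) μ :=
  fun _ _ => memLp_const c

@[fun_prop]
lemma norm {X : Ω → E} (hX : HasFiniteMoments X μ) : HasFiniteMoments (fun ω => ‖X ω‖) μ :=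
  fun p hp => (hX p hp).norm

@[fun_prop]
lemma add {X Y : Ω → E} (hX : HasFiniteMoments X μ) (hY : HasFiniteMoments Y μ) :
    HasFiniteMoments (fun ω => X ω + Y ω) μ :=
  fun p hp => (hX p hp).add (hY p hp)

@[fun_prop]
lemma sum {ι : Type*} {s : Finset ι} {X : ι → Ω → E} (hX : ∀ i, HasFiniteMoments (X i) μ) :
    HasFiniteMoments (fun ω => ∑ i ∈ s, X i ω) μ :=
  fun p hp => memLp_finsetSum s fun i _ => hX i p hp

@[fun_prop]
lemma mul {𝕜 : Type*} [NormedRing 𝕜] {X Y : Ω → 𝕜} (hX : HasFiniteMoments X μ)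
    (hY : HasFiniteMoments Y μ) : HasFiniteMoments (fun ω => X ω * Y ω) μ := by
  intro p hp
  have : ENNReal.HolderTriple (2 * p) (2 * p) p := ⟨by
    rw [ENNReal.mul_inv (by simp) (by simp), ← add_mul, ENNReal.inv_two_add_inv_two, one_mul]⟩
  have h2p : 2 * p ≠ ⊤ := ENNReal.mul_ne_top ENNReal.ofNat_ne_top hp
  exact (hY _ h2p).mul (hX _ h2p)

@[fun_prop]
lemma star [StarAddMonoid E] [NormedStarGroup E] {X : Ω → E} (hX : HasFiniteMoments X μ) :
    HasFiniteMoments (fun ω => star (X ω)) μ :=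
  fun p hp => (hX p hp).star

@[fun_prop]
lemma ofReal {X : Ω → ℝ} (hX : HasFiniteMoments X μ) : HasFiniteMoments (fun ω => (X ω : ℂ)) μ :=
  fun p hp => (hX p hp).ofReal

@[fun_prop]
lemma normSq {X : Ω → ℂ} (hX : HasFiniteMoments X μ) :
    HasFiniteMoments (fun ω => Complex.normSq (X ω)) μ := by
  simpa only [Complex.normSq_eq_norm_sq, sq] using hX.norm.mul hX.norm

@[fun_prop]
lemma sqrt [IsFiniteMeasure μ] {X : Ω → ℝ} (hX : HasFiniteMoments X μ) :
    HasFiniteMoments (fun ω => √(X ω)) μ := by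
  refine ((const 1).add hX.norm).mono
    (Real.continuous_sqrt.comp_aestronglyMeasurable hX.integrable.1) fun ω => ?_
  rw [Real.norm_of_nonneg (Real.sqrt_nonneg _), Real.norm_of_nonneg (by positivity),
    Real.sqrt_le_left (by positivity), Real.norm_eq_abs]
  nlinarith [le_abs_self (X ω), abs_nonneg (X ω)]

end HasFiniteMoments

section SecondMoment

variable {Ω Ω₀ ι : Type*} [MeasurableSpace Ω] [MeasurableSpace Ω₀] [Fintype ι]
  {μ : Measure Ω} {P : Measure Ω₀}

/-- The variance `E|X - E X|² = E|X|² - |E X|²` of a complex random variable. -/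
noncomputable def complexVariance (X : Ω → ℂ) (μ : Measure Ω) : ℝ :=
  Var[fun ω => (X ω).re; μ] + Var[fun ω => (X ω).im; μ]

lemma integral_normSq_eq_complexVariance_add [IsProbabilityMeasure μ] {X : Ω → ℂ}
    (hX : MemLp X 2 μ) :
    ∫ ω, normSq (X ω) ∂μ = complexVariance X μ + normSq (∫ ω, X ω ∂μ) := by
  have hre : ∫ ω, (X ω).re ∂μ = (∫ ω, X ω ∂μ).re := integral_re (hX.integrable one_le_two)
  have him : ∫ ω, (X ω).im ∂μ = (∫ ω, X ω ∂μ).im := integral_im (hX.integrable one_le_two)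
  have hadd : ∫ ω, normSq (X ω) ∂μ = ∫ ω, (X ω).re ^ 2 ∂μ + ∫ ω, (X ω).im ^ 2 ∂μ := by
    simp only [normSq_apply, ← sq]
    exact integral_add hX.re.integrable_sq hX.im.integrable_sq
  have hVre : Var[fun ω => (X ω).re; μ] = ∫ ω, (X ω).re ^ 2 ∂μ - (∫ ω, (X ω).re ∂μ) ^ 2 :=
    variance_eq_sub hX.re
  have hVim : Var[fun ω => (X ω).im; μ] = ∫ ω, (X ω).im ^ 2 ∂μ - (∫ ω, (X ω).im ∂μ) ^ 2 :=
    variance_eq_sub hX.im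
  rw [complexVariance, hVre, hVim, hadd, hre, him, normSq_apply]
  ring

lemma integral_sum_comp_measurePreserving {E : Type*} [NormedAddCommGroup E] [NormedSpace ℝ E]
    {T : ι → Ω → Ω₀} (hT : ∀ i, MeasurePreserving (T i) μ P) {F : Ω₀ → E} (hF : Integrable F P) :
    ∫ ω, ∑ i, F (T i ω) ∂μ = Fintype.card ι • ∫ a, F a ∂P := by
  have hcomp (i : ι) : ∫ ω, F (T i ω) ∂μ = ∫ a, F a ∂P := by
    rw [← (hT i).map_eq] at hF ⊢
    exact (integral_map (hT i).aemeasurable hF.1).symm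
  have hint (i : ι) : Integrable (fun ω => F (T i ω)) μ := (hT i).integrable_comp_of_integrable hF
  rw [integral_finsetSum _ fun i _ => hint i]
  simp only [hcomp, Finset.sum_const, Finset.card_univ]

lemma variance_sum_comp_measurePreserving {T : ι → Ω → Ω₀}
    (hT : ∀ i, MeasurePreserving (T i) μ P) (hind : Pairwise fun i j => T i ⟂ᵢ[μ] T j)
    {F : Ω₀ → ℝ} (hF : MemLp F 2 P) :
    Var[fun ω => ∑ i, F (T i ω); μ] = Fintype.card ι • Var[F; P] := by
  have hFT (i : ι) : MemLp (F ∘ T i) 2 μ := hF.comp_measurePreserving (hT i)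
  have hvar (i : ι) : Var[F ∘ T i; μ] = Var[F; P] := (hT i).variance_fun_comp hF.1.aemeasurable
  have hsum := IndepFun.variance_sum (s := Finset.univ) (fun i _ => hFT i) fun i _ j _ hij =>
    (hind hij).comp₀ (hT i).aemeasurable (hT j).aemeasurable
      ((hT i).map_eq ▸ hF.1.aemeasurable) ((hT j).map_eq ▸ hF.1.aemeasurable)
  simp only [hvar, Finset.sum_const, Finset.card_univ] at hsum
  rw [← hsum]
  congr 1
  ext ω
  simp only [Finset.sum_apply, Function.comp_apply]

lemma complexVariance_sum_comp_measurePreserving {T : ι → Ω → Ω₀}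
    (hT : ∀ i, MeasurePreserving (T i) μ P) (hind : Pairwise fun i j => T i ⟂ᵢ[μ] T j)
    {F : Ω₀ → ℂ} (hF : MemLp F 2 P) :
    complexVariance (fun ω => ∑ i, F (T i ω)) μ = Fintype.card ι • complexVariance F P := by
  have hre : MemLp (fun a => (F a).re) 2 P := hF.re
  have him : MemLp (fun a => (F a).im) 2 P := hF.im
  simp only [complexVariance, re_sum, im_sum, smul_add]
  rw [variance_sum_comp_measurePreserving hT hind hre,
    variance_sum_comp_measurePreserving hT hind him]

lemma integral_normSq_sum_comp_measurePreserving [IsProbabilityMeasure μ] [IsFiniteMeasure P]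
    {T : ι → Ω → Ω₀} (hT : ∀ i, MeasurePreserving (T i) μ P)
    (hind : Pairwise fun i j => T i ⟂ᵢ[μ] T j) {F : Ω₀ → ℂ} (hF : MemLp F 2 P) :
    ∫ ω, normSq (∑ i, F (T i ω)) ∂μ =
      Fintype.card ι ^ 2 * normSq (∫ a, F a ∂P) + Fintype.card ι * complexVariance F P := by
  have hsum : MemLp (fun ω => ∑ i, F (T i ω)) 2 μ :=
    memLp_finsetSum _ fun i _ => hF.comp_measurePreserving (hT i)
  rw [integral_normSq_eq_complexVariance_add hsum,
    complexVariance_sum_comp_measurePreserving hT hind hF,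
    integral_sum_comp_measurePreserving hT (hF.integrable one_le_two)]
  simp only [nsmul_eq_mul, normSq_mul, normSq_natCast]
  ring

end SecondMoment

section Blocks

variable {Ω ι κ 𝓧 : Type*} [MeasurableSpace Ω] [MeasurableSpace 𝓧] {μ : Measure Ω}

lemma iIndepFun_curry [IsProbabilityMeasure μ] {X : ι × κ → Ω → 𝓧} (hX : ∀ q, Measurable (X q))
    (h : iIndepFun X μ) : iIndepFun (fun i ω j => X (i, j) ω) μ := by
  have _ (q : ι × κ) : IsProbabilityMeasure (μ.map (X q)) :=
    Measure.isProbabilityMeasure_map (hX q).aemeasurable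
  have hblock (i : ι) : μ.map (fun ω j => X (i, j) ω) =
      Measure.infinitePi fun j => μ.map (X (i, j)) :=
    (h.precomp (Prod.mk_right_injective i)).map_fun_eq_infinitePi_map fun _ => hX _
  rw [iIndepFun_iff_map_fun_eq_infinitePi_map (by fun_prop)]
  simp only [hblock]
  rw [← Measure.infinitePi_map_curry fun i j => μ.map (X (i, j)),
    ← h.map_fun_eq_infinitePi_map hX, Measure.map_map (by fun_prop) (by fun_prop)]
  rfl

end Blocks

section CenteredGaussianPi

open scoped NNReal

variable {ι : Type*} (v : ι → ℝ≥0)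

/-- The law of a family of independent centered real Gaussian variables with variances `v i`. -/
noncomputable def centeredGaussianPi : Measure (ι → ℝ) :=
  Measure.infinitePi fun i => gaussianReal 0 (v i)

instance : IsProbabilityMeasure (centeredGaussianPi v) := by
  unfold centeredGaussianPi
  infer_instance

namespace centeredGaussianPi

lemma measurePreserving_eval (i : ι) :
    MeasurePreserving (fun g : ι → ℝ => g i) (centeredGaussianPi v) (gaussianReal 0 (v i)) :=
  measurePreserving_eval_infinitePi _ i

lemma iIndepFun_eval : iIndepFun (fun i (g : ι → ℝ) => g i) (centeredGaussianPi v) :=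
  iIndepFun_infinitePi (X := fun _ => id) fun _ => measurable_id

@[fun_prop]
lemma hasFiniteMoments_eval (i : ι) :
    HasFiniteMoments (fun g : ι → ℝ => g i) (centeredGaussianPi v) :=
  HasFiniteMoments.comp_measurePreserving (X := id) (memLp_id_gaussianReal' ·)
    (measurePreserving_eval v i)

lemma integral_eval_sq (i : ι) : ∫ g, g i ^ 2 ∂centeredGaussianPi v = v i := by
  have hpre := measurePreserving_eval v i
  have hvar : ∫ y, y ^ 2 ∂gaussianReal 0 (v i) = v i := by
    rw [← variance_of_integral_eq_zero aemeasurable_id' integral_id_gaussianReal,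
      variance_fun_id_gaussianReal]
  rw [← hvar, ← hpre.map_eq, integral_map hpre.aemeasurable (by fun_prop)]

open scoped Classical in
/-- Reverses the sign of the coordinates in `S`. -/
noncomputable def flipSign (S : Set ι) (g : ι → ℝ) : ι → ℝ :=
  S.piecewise (-g) g

lemma flipSign_of_notMem {S : Set ι} {i : ι} (hi : i ∉ S) (g : ι → ℝ) :
    flipSign S g i = g i := by
  simp [flipSign, hi]

lemma flipSign_involutive (S : Set ι) : Function.Involutive (flipSign S) := by
  intro g
  ext i
  by_cases hi : i ∈ S <;> simp [flipSign, hi]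

lemma measurePreserving_flipSign (S : Set ι) :
    MeasurePreserving (flipSign S) (centeredGaussianPi v) (centeredGaussianPi v) := by
  classical
  let s (i : ι) (y : ℝ) : ℝ := if i ∈ S then -y else y
  have hs (i : ι) : Measurable (s i) := by
    by_cases hi : i ∈ S <;> simp only [s, hi, if_true, if_false] <;> fun_prop
  have hlaw (i : ι) : (gaussianReal 0 (v i)).map (s i) = gaussianReal 0 (v i) := by
    by_cases hi : i ∈ S
    · simp only [s, hi, if_true, gaussianReal_map_neg, neg_zero]
    · simp only [s, hi, if_false, Measure.map_id']
  have hflip : flipSign S = fun g i => s i (g i) := by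
    ext g i
    by_cases hi : i ∈ S <;> simp [flipSign, s, hi]
  refine ⟨by rw [hflip]; fun_prop, ?_⟩
  rw [hflip, centeredGaussianPi, Measure.infinitePi_map_pi _ hs]
  simp only [hlaw]

lemma integral_eq_zero_of_flipSign {E : Type*} [NormedAddCommGroup E] [NormedSpace ℝ E]
    {F : (ι → ℝ) → E} (S : Set ι) (hF : ∀ g, F (flipSign S g) = -F g) :
    ∫ g, F g ∂centeredGaussianPi v = 0 := by
  have : IsAddTorsionFree E := .of_isTorsionFree ℝ E
  have hpre := measurePreserving_flipSign v S
  have hemb := (MeasurableEquiv.ofInvolutive (flipSign S) (flipSign_involutive S)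
    hpre.measurable).measurableEmbedding
  have hneg : ∫ g, F g ∂centeredGaussianPi v = -∫ g, F g ∂centeredGaussianPi v := by
    rw [← integral_neg, ← hpre.integral_comp hemb F]
    simp only [hF]
  exact self_eq_neg.1 hneg

lemma integral_cexp_sum (s : Finset ι) :
    ∫ g, cexp (I * (∑ i ∈ s, g i : ℝ)) ∂centeredGaussianPi v =
      Real.exp (-(∑ i ∈ s, (v i : ℝ)) / 2) := by
  have hchar := iIndepFun.charFun_map_fun_finsetSum_eq_prod (s := s)
    (fun i _ => (measurePreserving_eval v i).aemeasurable) ((iIndepFun_eval v).restrict _)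
  have hchar_one := congrFun hchar 1
  simp only [Finset.prod_apply, (measurePreserving_eval v _).map_eq, charFun_gaussianReal,
    ← Complex.exp_sum] at hchar_one
  rw [charFun_apply_real, integral_map (by fun_prop) (by fun_prop)] at hchar_one
  convert hchar_one using 2
  · ext g
    simp [mul_comm]
  · simp [← Finset.sum_div, neg_div]

lemma integral_cexp_sum_mul_sq {s : Finset ι} {i : ι} (hi : i ∉ s) :
    ∫ g, cexp (I * (∑ i ∈ s, g i : ℝ)) * (g i : ℂ) ^ 2 ∂centeredGaussianPi v =
      Real.exp (-(∑ i ∈ s, (v i : ℝ)) / 2) * v i := by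
  have hind : IndepFun (fun g : ι → ℝ => ∑ i ∈ s, g i) (fun g => g i) (centeredGaussianPi v) := by
    simpa only [Finset.sum_fn] using
      (iIndepFun_eval v).indepFun_finsetSum_of_notMem (by fun_prop) hi
  have hmul := hind.integral_fun_comp_mul_comp (f := fun y : ℝ => cexp (I * y))
    (g := fun y : ℝ => (y : ℂ) ^ 2) (by fun_prop) (measurePreserving_eval v i).aemeasurable
    (Measurable.aestronglyMeasurable (by fun_prop)) (by fun_prop)
  rw [hmul, integral_cexp_sum]
  congr 1
  exact_mod_cast integral_complex_ofReal.trans (congrArg _ (integral_eval_sq v i))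

end centeredGaussianPi

end CenteredGaussianPi

/-- The real random sources feeding one antenna: real and imaginary parts of the channel
coefficients, phase-drift increments, and real and imaginary parts of the distortion variables and
of the receiver noise. -/
inductive AntennaSource (L K : ℕ)
  | chRe (l : Fin L) (m : Fin K)
  | chIm (l : Fin L) (m : Fin K)
  | drift (u : ℕ)
  | distRe (s : ℕ)
  | distIm (s : ℕ)
  | noiseRe (s : ℕ)
  | noiseIm (s : ℕ)

namespace AntennaSource

open centeredGaussianPi

open scoped NNReal

variable {B L K : ℕ}

/-- The variances of the sources, for channel attenuations `lam`, receiver-noise power `ν` and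
phase-drift variance `δ`. -/
noncomputable def variance (lam : Fin L → Fin K → ℝ) (ν δ : ℝ) : AntennaSource L K → ℝ≥0
  | chRe l m | chIm l m => (lam l m / 2).toNNReal
  | drift _ => δ.toNNReal
  | distRe _ | distIm _ => (1 / 2 : ℝ).toNNReal
  | noiseRe _ | noiseIm _ => (ν / 2).toNNReal

/-- The joint law of the sources of one antenna. -/
noncomputable abbrev law (lam : Fin L → Fin K → ℝ) (ν δ : ℝ) : Measure (AntennaSource L K → ℝ) :=
  centeredGaussianPi (variance lam ν δ)

/-- The oscillator rotation `e^{iφ(s)}`. -/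
noncomputable def rotation (s : ℕ) (g : AntennaSource L K → ℝ) : ℂ :=
  cexp (I * ((∑ u ∈ Finset.Icc 1 s, g (drift u) : ℝ) : ℂ))

/-- The channel coefficient `h_{lm}`. -/
noncomputable def channel (l : Fin L) (m : Fin K) (g : AntennaSource L K → ℝ) : ℂ :=
  ⟨g (chRe l m), g (chIm l m)⟩

/-- The distortion variable `z(s)`. -/
noncomputable def distortion (s : ℕ) (g : AntennaSource L K → ℝ) : ℂ :=
  ⟨g (distRe s), g (distIm s)⟩

/-- The receiver noise `η(s)`. -/
noncomputable def noise (s : ℕ) (g : AntennaSource L K → ℝ) : ℂ :=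
  ⟨g (noiseRe s), g (noiseIm s)⟩

/-- The amplitude `(Σ w_{lm} |h_{lm}|²)^{1/2}` of the distortion noise caused by powers `w`. -/
noncomputable def amplitude (w : Fin L → Fin K → ℝ) (g : AntennaSource L K → ℝ) : ℝ :=
  √(∑ l, ∑ m, w l m * normSq (channel l m g))

/-- The received pilot signal `y(b)`. -/
noncomputable def pilot (κ : ℝ) (x : Fin L → Fin K → Fin B → ℂ) (b : Fin B)
    (g : AntennaSource L K → ℝ) : ℂ :=
  rotation ((b : ℕ) + 1) g * ∑ l, ∑ m, channel l m g * x l m b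
    + κ * amplitude (fun l m => normSq (x l m b)) g * distortion ((b : ℕ) + 1) g
    + noise ((b : ℕ) + 1) g

/-- The linear estimate `Σ_b c_b y(b)` with weights `c`. -/
noncomputable def linEst (κ : ℝ) (x : Fin L → Fin K → Fin B → ℂ) (c : Fin B → ℂ)
    (g : AntennaSource L K → ℝ) : ℂ :=
  ∑ b, c b * pilot κ x b g

/-- The effective channel `e^{iφ(t)} h_{lm}`. -/
noncomputable def effChannel (l : Fin L) (m : Fin K) (t : ℕ) (g : AntennaSource L K → ℝ) : ℂ :=
  rotation t g * channel l m g

/-- The data-phase distortion noise `υ(t)` at transmit powers `p`. -/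
noncomputable def dataDistortion (κ : ℝ) (p : Fin L → Fin K → ℝ) (t : ℕ)
    (g : AntennaSource L K → ℝ) : ℂ :=
  κ * amplitude p g * distortion t g

section Moments

variable {lam : Fin L → Fin K → ℝ} {ν δ : ℝ}

@[fun_prop]
lemma hasFiniteMoments_rotation (s : ℕ) : HasFiniteMoments (rotation s) (law lam ν δ) := by
  refine (HasFiniteMoments.const (1 : ℂ)).mono
    (Measurable.aestronglyMeasurable (by unfold rotation; fun_prop)) fun g => ?_
  rw [rotation, mul_comm, norm_exp_ofReal_mul_I, norm_one]

lemma hasFiniteMoments_mk_eval (i i' : AntennaSource L K) :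
    HasFiniteMoments (fun g => (⟨g i, g i'⟩ : ℂ)) (law lam ν δ) := by
  simp only [mk_eq_add_mul_I]
  fun_prop

@[fun_prop]
lemma hasFiniteMoments_channel (l : Fin L) (m : Fin K) :
    HasFiniteMoments (channel l m) (law lam ν δ) :=
  hasFiniteMoments_mk_eval _ _

@[fun_prop]
lemma hasFiniteMoments_distortion (s : ℕ) : HasFiniteMoments (distortion s) (law lam ν δ) :=
  hasFiniteMoments_mk_eval _ _

@[fun_prop]
lemma hasFiniteMoments_noise (s : ℕ) : HasFiniteMoments (noise s) (law lam ν δ) :=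
  hasFiniteMoments_mk_eval _ _

@[fun_prop]
lemma hasFiniteMoments_amplitude (w : Fin L → Fin K → ℝ) :
    HasFiniteMoments (amplitude w) (law lam ν δ) := by
  unfold amplitude
  fun_prop

@[fun_prop]
lemma hasFiniteMoments_pilot (κ : ℝ) (x : Fin L → Fin K → Fin B → ℂ) (b : Fin B) :
    HasFiniteMoments (pilot κ x b) (law lam ν δ) := by
  unfold pilot
  fun_prop

@[fun_prop]
lemma hasFiniteMoments_linEst (κ : ℝ) (x : Fin L → Fin K → Fin B → ℂ) (c : Fin B → ℂ) :
    HasFiniteMoments (linEst κ x c) (law lam ν δ) := by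
  unfold linEst
  fun_prop

@[fun_prop]
lemma hasFiniteMoments_effChannel (l : Fin L) (m : Fin K) (t : ℕ) :
    HasFiniteMoments (effChannel l m t) (law lam ν δ) := by
  unfold effChannel
  fun_prop

@[fun_prop]
lemma hasFiniteMoments_dataDistortion (κ : ℝ) (p : Fin L → Fin K → ℝ) (t : ℕ) :
    HasFiniteMoments (dataDistortion κ p t) (law lam ν δ) := by
  unfold dataDistortion
  fun_prop

end Moments

section CrossMoments

variable {lam : Fin L → Fin K → ℝ} {ν δ : ℝ}

/-- The phase-drift increments at times `s < u ≤ t`. -/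
def driftBetween (s t : ℕ) : Finset (AntennaSource L K) :=
  (Finset.Ioc s t).map ⟨drift, fun _ _ => drift.inj⟩

lemma sum_driftBetween {E : Type*} [AddCommMonoid E] (f : AntennaSource L K → E) (s t : ℕ) :
    ∑ i ∈ driftBetween s t, f i = ∑ u ∈ Finset.Ioc s t, f (drift u) :=
  Finset.sum_map _ _ _

lemma star_rotation_mul_rotation {s t : ℕ} (hst : s ≤ t) (g : AntennaSource L K → ℝ) :
    star (rotation s g) * rotation t g = cexp (I * (∑ i ∈ driftBetween s t, g i : ℝ)) := by
  have hsplit : ∑ u ∈ Finset.Icc 1 t, g (drift u) =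
      ∑ u ∈ Finset.Icc 1 s, g (drift u) + ∑ i ∈ driftBetween s t, g i := by
    have hunion : Finset.Icc 1 t = Finset.Icc 1 s ∪ Finset.Ioc s t := by
      ext u
      simp only [Finset.mem_union, Finset.mem_Icc, Finset.mem_Ioc]
      omega
    have hdisj : Disjoint (Finset.Icc 1 s) (Finset.Ioc s t) := by
      rw [Finset.disjoint_left]
      simp only [Finset.mem_Icc, Finset.mem_Ioc]
      omega
    rw [sum_driftBetween, hunion, Finset.sum_union hdisj]
  rw [rotation, rotation, hsplit, star_def, ← exp_conj, ← Complex.exp_add]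
  congr 1
  simp only [map_mul, conj_I, conj_ofReal]
  push_cast
  ring

lemma integral_star_effChannel_mul_effChannel (hlam : ∀ l m, 0 ≤ lam l m) (hδ : 0 ≤ δ)
    (l : Fin L) (m : Fin K) {s t : ℕ} (hst : s ≤ t) :
    ∫ g, star (effChannel l m s g) * effChannel l m t g ∂law lam ν δ =
      lam l m * Real.exp (-(δ / 2) * (t - s)) := by
  have hRe : chRe l m ∉ driftBetween s t := by simp [driftBetween]
  have hIm : chIm l m ∉ driftBetween s t := by simp [driftBetween]
  have hsplit (g : AntennaSource L K → ℝ) : star (effChannel l m s g) * effChannel l m t g =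
      cexp (I * (∑ i ∈ driftBetween s t, g i : ℝ)) * (g (chRe l m) : ℂ) ^ 2 +
        cexp (I * (∑ i ∈ driftBetween s t, g i : ℝ)) * (g (chIm l m) : ℂ) ^ 2 := by
    have hnorm : star (channel l m g) * channel l m g =
        (g (chRe l m) : ℂ) ^ 2 + (g (chIm l m) : ℂ) ^ 2 := by
      rw [star_def, ← normSq_eq_conj_mul_self, normSq_apply, channel]
      push_cast
      ring
    rw [← star_rotation_mul_rotation hst, ← mul_add, ← hnorm, effChannel, effChannel, star_mul']
    ring
  simp only [hsplit]
  rw [integral_add, integral_cexp_sum_mul_sq _ hRe, integral_cexp_sum_mul_sq _ hIm]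
  · have hvar : ∑ i ∈ driftBetween (L := L) (K := K) s t, (variance lam ν δ i : ℝ) =
        (t - s) * δ := by
      simp [sum_driftBetween, variance, hδ, Nat.cast_sub hst]
    have hhalf : 0 ≤ lam l m / 2 := div_nonneg (hlam l m) two_pos.le
    rw [hvar, show -((t - s) * δ) / 2 = -(δ / 2) * (t - s) by ring]
    simp only [variance, Real.coe_toNNReal _ hhalf]
    push_cast
    ring
  all_goals
    simp only [← star_rotation_mul_rotation hst]
    exact HasFiniteMoments.integrable (by simp only [sq]; fun_prop)

lemma pilot_sub_effChannel_mul (κ : ℝ) (x : Fin L → Fin K → Fin B → ℂ) (b : Fin B) (l : Fin L)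
    (m : Fin K) (g : AntennaSource L K → ℝ) :
    pilot κ x b g - effChannel l m (b + 1) g * x l m b =
      rotation (b + 1) g * ∑ lm ∈ Finset.univ.erase (l, m), channel lm.1 lm.2 g * x lm.1 lm.2 b
        + κ * amplitude (fun l m => normSq (x l m b)) g * distortion (b + 1) g
        + noise (b + 1) g := by
  rw [pilot, effChannel, ← Fintype.sum_prod_type' fun l m => channel l m g * x l m b,
    ← Finset.add_sum_erase _ _ (Finset.mem_univ (l, m))]
  ring

lemma channel_flipSign_self (l : Fin L) (m : Fin K) (g : AntennaSource L K → ℝ) :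
    channel l m (flipSign {chRe l m, chIm l m} g) = -channel l m g := by
  apply Complex.ext <;> simp [channel, flipSign]

lemma channel_flipSign_of_ne {l l' : Fin L} {m m' : Fin K} (h : (l', m') ≠ (l, m))
    (g : AntennaSource L K → ℝ) :
    channel l' m' (flipSign {chRe l m, chIm l m} g) = channel l' m' g := by
  have hRe : chRe l' m' ∉ ({chRe l m, chIm l m} : Set (AntennaSource L K)) := by simpa using h
  have hIm : chIm l' m' ∉ ({chRe l m, chIm l m} : Set (AntennaSource L K)) := by simpa using h
  rw [channel, channel, flipSign_of_notMem hRe, flipSign_of_notMem hIm]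

lemma rotation_flipSign {S : Set (AntennaSource L K)} (hS : ∀ u, drift u ∉ S) (s : ℕ)
    (g : AntennaSource L K → ℝ) : rotation s (flipSign S g) = rotation s g := by
  simp only [rotation, flipSign_of_notMem (hS _)]

lemma amplitude_flipSign_channel (w : Fin L → Fin K → ℝ) (l : Fin L) (m : Fin K)
    (g : AntennaSource L K → ℝ) :
    amplitude w (flipSign {chRe l m, chIm l m} g) = amplitude w g := by
  have hnormSq (l' : Fin L) (m' : Fin K) :
      normSq (channel l' m' (flipSign {chRe l m, chIm l m} g)) = normSq (channel l' m' g) := by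
    by_cases h : (l', m') = (l, m)
    · obtain ⟨rfl, rfl⟩ := Prod.mk.inj h
      rw [channel_flipSign_self, normSq_neg]
    · rw [channel_flipSign_of_ne h]
  simp only [amplitude, hnormSq]

lemma pilot_sub_effChannel_mul_flipSign (κ : ℝ) (x : Fin L → Fin K → Fin B → ℂ) (b : Fin B)
    (l : Fin L) (m : Fin K) (g : AntennaSource L K → ℝ) :
    pilot κ x b (flipSign {chRe l m, chIm l m} g)
        - effChannel l m (b + 1) (flipSign {chRe l m, chIm l m} g) * x l m b =
      pilot κ x b g - effChannel l m (b + 1) g * x l m b := by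
  have hother : ∑ lm ∈ Finset.univ.erase (l, m),
      channel lm.1 lm.2 (flipSign {chRe l m, chIm l m} g) * x lm.1 lm.2 b =
        ∑ lm ∈ Finset.univ.erase (l, m), channel lm.1 lm.2 g * x lm.1 lm.2 b :=
    Finset.sum_congr rfl fun lm hlm => by
      rw [channel_flipSign_of_ne (Finset.ne_of_mem_erase hlm)]
  simp only [pilot_sub_effChannel_mul]
  rw [hother, amplitude_flipSign_channel, rotation_flipSign (by simp)]
  simp [distortion, noise, flipSign]

-- The distortion depends on the channels only through their moduli, so reversing the sign of one
-- channel changes no contribution to the pilot signal but its own.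
lemma integral_star_pilot_mul_effChannel (hlam : ∀ l m, 0 ≤ lam l m) (hδ : 0 ≤ δ) (κ : ℝ)
    (x : Fin L → Fin K → Fin B → ℂ) (b : Fin B) {t : ℕ} (ht : B < t) (l : Fin L) (m : Fin K) :
    ∫ g, star (pilot κ x b g) * effChannel l m t g ∂law lam ν δ =
      lam l m * star (Real.exp (-(δ / 2) * (t - ((b : ℕ) + 1))) * x l m b) := by
  have hsplit (g : AntennaSource L K → ℝ) : star (pilot κ x b g) * effChannel l m t g =
      star (x l m b) * (star (effChannel l m (b + 1) g) * effChannel l m t g)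
        + star (pilot κ x b g + -1 * (effChannel l m (b + 1) g * x l m b))
          * effChannel l m t g := by
    simp only [star_add, star_mul', star_neg, star_one]
    ring
  have hrest : ∫ g, star (pilot κ x b g + -1 * (effChannel l m (b + 1) g * x l m b))
      * effChannel l m t g ∂law lam ν δ = 0 := by
    refine integral_eq_zero_of_flipSign _ {chRe l m, chIm l m} fun g => ?_
    simp only [neg_one_mul, ← sub_eq_add_neg]
    have heff : effChannel l m t (flipSign {chRe l m, chIm l m} g) = -effChannel l m t g := by
      rw [effChannel, effChannel, channel_flipSign_self, rotation_flipSign (by simp), mul_neg]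
    rw [pilot_sub_effChannel_mul_flipSign, heff, mul_neg]
  have hbt : (b : ℕ) + 1 ≤ t := (Nat.succ_le_of_lt b.2).trans ht.le
  simp only [hsplit]
  rw [integral_add (HasFiniteMoments.integrable (by fun_prop))
    (HasFiniteMoments.integrable (by fun_prop)), hrest, add_zero, integral_const_mul,
    integral_star_effChannel_mul_effChannel hlam hδ l m hbt, star_mul']
  simp only [star_def, conj_ofReal]
  push_cast
  ring

lemma integral_star_linEst_mul_effChannel (hlam : ∀ l m, 0 ≤ lam l m) (hδ : 0 ≤ δ) (κ : ℝ)
    (x : Fin L → Fin K → Fin B → ℂ) (c : Fin B → ℂ) {t : ℕ} (ht : B < t) (l : Fin L) (m : Fin K) :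
    ∫ g, star (linEst κ x c g) * effChannel l m t g ∂law lam ν δ =
      lam l m * star (c ⬝ᵥ Dmat δ t B *ᵥ x l m) := by
  have hsum (g : AntennaSource L K → ℝ) : star (linEst κ x c g) * effChannel l m t g =
      ∑ b, star (c b) * (star (pilot κ x b g) * effChannel l m t g) := by
    simp only [linEst, star_sum, star_mul', Finset.sum_mul, mul_assoc]
  simp only [hsum]
  rw [integral_finsetSum _ fun b _ => HasFiniteMoments.integrable (by fun_prop)]
  simp only [integral_const_mul, integral_star_pilot_mul_effChannel hlam hδ κ x _ ht, dotProduct,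
    Dmat, mulVec_diagonal, star_sum, star_mul', Finset.mul_sum]
  exact Finset.sum_congr rfl fun b _ => mul_left_comm _ _ _

lemma integral_star_linEst_mul_dataDistortion (κ : ℝ) (x : Fin L → Fin K → Fin B → ℂ)
    (c : Fin B → ℂ) (p : Fin L → Fin K → ℝ) {t : ℕ} (ht : B < t) :
    ∫ g, star (linEst κ x c g) * dataDistortion κ p t g ∂law lam ν δ = 0 := by
  refine integral_eq_zero_of_flipSign _ {distRe t, distIm t} fun g => ?_
  have hbt (b : Fin B) : (b : ℕ) + 1 ≠ t := ((Nat.succ_le_of_lt b.2).trans_lt ht).ne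
  have hlinEst : linEst κ x c (flipSign {distRe t, distIm t} g) = linEst κ x c g := by
    simp [linEst, pilot, rotation_flipSign, amplitude, channel, distortion, noise,
      flipSign_of_notMem, hbt]
  have hdist : dataDistortion κ p t (flipSign {distRe t, distIm t} g) =
      -dataDistortion κ p t g := by
    have hz : distortion t (flipSign {distRe t, distIm t} g) = -distortion t g := by
      apply Complex.ext <;> simp [distortion, flipSign]
    have hamp : amplitude p (flipSign {distRe t, distIm t} g) = amplitude p g := by
      simp [amplitude, channel, flipSign]
    rw [dataDistortion, dataDistortion, hz, hamp, mul_neg]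
  rw [hlinEst, hdist, mul_neg]

end CrossMoments

/-- The part of the interference power that grows only linearly in the number of antennas: what one
antenna contributes through the fluctuations of the effective channels, the data-phase distortion
and the receiver noise of power `ν`, when combined with the linear estimate with weights `c`. -/
noncomputable def residualPower (lam : Fin L → Fin K → ℝ) (ν κ δ : ℝ)
    (x : Fin L → Fin K → Fin B → ℂ) (c : Fin B → ℂ) (p : Fin L → Fin K → ℝ) (t : ℕ) : ℝ :=
  ∑ l, ∑ m, p l m *
      complexVariance (fun g => star (linEst κ x c g) * effChannel l m t g) (law lam ν δ)
    + complexVariance (fun g => star (linEst κ x c g) * dataDistortion κ p t g) (law lam ν δ)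
    + ν * ∫ g, normSq (linEst κ x c g) ∂law lam ν δ

end AntennaSource

namespace MIMOModel

open AntennaSource

section

variable {Ω : Type*} [MeasureSpace Ω] {N B L K : ℕ} {lam : Fin L → Fin K → ℝ} {σ2 ξ κ δ : ℝ}
  {x : Fin L → Fin K → Fin B → ℂ} (M : MIMOModel Ω N B L K lam σ2 ξ κ δ x)

/-- The random sources feeding antenna `n`. -/
def antenna (n : Fin N) (ω : Ω) : AntennaSource L K → ℝ
  | chRe l m => M.hRe l m n ω
  | chIm l m => M.hIm l m n ω
  | drift u => M.dphi n u ω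
  | distRe s => M.zRe n s ω
  | distIm s => M.zIm n s ω
  | noiseRe s => M.etaRe n s ω
  | noiseIm s => M.etaIm n s ω

/-- The position of a source of antenna `n` in the independent family `MIMOModel.indep`. -/
def sourceIndex : Fin N × AntennaSource L K →
    (Fin L × Fin K × Fin N × Bool) ⊕ (Fin N × ℕ) ⊕ (Fin N × ℕ × Bool) ⊕ (Fin N × ℕ × Bool)
  | (n, chRe l m) => .inl (l, m, n, false)
  | (n, chIm l m) => .inl (l, m, n, true)
  | (n, drift u) => .inr (.inl (n, u))
  | (n, distRe s) => .inr (.inr (.inl (n, s, false)))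
  | (n, distIm s) => .inr (.inr (.inl (n, s, true)))
  | (n, noiseRe s) => .inr (.inr (.inr (n, s, false)))
  | (n, noiseIm s) => .inr (.inr (.inr (n, s, true)))

lemma sourceIndex_injective : Function.Injective (sourceIndex (N := N) (L := L) (K := K)) := by
  rintro ⟨n, i⟩ ⟨n', i'⟩ h
  cases i <;> cases i' <;> simp_all [sourceIndex]

lemma measurable_antenna_apply (n : Fin N) (i : AntennaSource L K) :
    Measurable fun ω => M.antenna n ω i := by
  cases i
  exacts [M.meas_hRe _ _ n, M.meas_hIm _ _ n, M.meas_dphi n _, M.meas_zRe n _, M.meas_zIm n _,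
    M.meas_etaRe n _, M.meas_etaIm n _]

lemma map_antenna_apply (n : Fin N) (i : AntennaSource L K) :
    Measure.map (fun ω => M.antenna n ω i) ℙ = gaussianReal 0 (variance lam (σ2 * ξ) δ i) := by
  cases i
  exacts [M.law_hRe _ _ n, M.law_hIm _ _ n, M.law_dphi n _, M.law_zRe n _, M.law_zIm n _,
    M.law_etaRe n _, M.law_etaIm n _]

lemma iIndepFun_antenna_apply :
    iIndepFun (fun (q : Fin N × AntennaSource L K) ω => M.antenna q.1 ω q.2) (ℙ : Measure Ω) := by
  refine (M.indep.precomp sourceIndex_injective).congr fun q => .of_eq ?_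
  obtain ⟨n, i⟩ := q
  cases i <;> rfl

lemma measurePreserving_antenna (n : Fin N) :
    MeasurePreserving (M.antenna n) ℙ (law lam (σ2 * ξ) δ) := by
  refine ⟨measurable_pi_lambda _ fun i => M.measurable_antenna_apply n i, ?_⟩
  have hmap := (M.iIndepFun_antenna_apply.precomp
    (Prod.mk_right_injective n)).map_fun_eq_infinitePi_map fun i => M.measurable_antenna_apply n i
  exact hmap.trans (by simp only [map_antenna_apply]; rfl)

/-- The SINR of user `k` in cell `j` at time `t` with an arbitrary receive filter `v`. -/
noncomputable def filterSINR (v : Fin N → Ω → ℂ) (p : Fin L → Fin K → ℝ) (j : Fin L) (k : Fin K)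
    (t : ℕ) : ℝ :=
  p j k * normSq (∫ ω, ∑ n, star (v n ω) * M.hEff j k t n ω) /
    ((∑ l, ∑ m, p l m * ∫ ω, normSq (∑ n, star (v n ω) * M.hEff l m t n ω))
      - p j k * normSq (∫ ω, ∑ n, star (v n ω) * M.hEff j k t n ω)
      + (∫ ω, normSq (∑ n, star (v n ω) * M.ups p t n ω))
      + σ2 * ξ * ∫ ω, ∑ n, normSq (v n ω))

lemma filterSINR_const_mul {r : ℂ} (hr : r ≠ 0) (v : Fin N → Ω → ℂ) (p : Fin L → Fin K → ℝ)
    (j : Fin L) (k : Fin K) (t : ℕ) :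
    M.filterSINR (fun n ω => r * v n ω) p j k t = M.filterSINR v p j k t := by
  have hr' : normSq r ≠ 0 := normSq_eq_zero.not.2 hr
  simp only [filterSINR, star_mul', mul_assoc, ← Finset.mul_sum, normSq_mul, integral_const_mul,
    star_def, normSq_conj, mul_left_comm _ (normSq r), ← mul_sub, ← mul_add]
  exact mul_div_mul_left _ _ hr'

lemma SINR_eq_filterSINR_linEst {j : Fin L} {k : Fin K} (hlam : lam j k ≠ 0)
    (p : Fin L → Fin K → ℝ) (t : ℕ) :
    M.SINR p j k t = M.filterSINR (fun n ω => linEst κ x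
      (star (x j k) ᵥ* (Dmat δ t B * (PsiMat lam σ2 ξ κ δ x)⁻¹)) (M.antenna n ω)) p j k t :=
  M.filterSINR_const_mul (ofReal_ne_zero.2 hlam) _ p j k t

lemma normSq_integral_sum_star_linEst_mul_hEff (hlam : ∀ l m, 0 ≤ lam l m) (hδ : 0 ≤ δ) {t : ℕ}
    (ht : B < t) (c : Fin B → ℂ) (l : Fin L) (m : Fin K) :
    normSq (∫ ω, ∑ n, star (linEst κ x c (M.antenna n ω)) * M.hEff l m t n ω) =
      N ^ 2 * (lam l m ^ 2 * normSq (c ⬝ᵥ Dmat δ t B *ᵥ x l m)) := by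
  have hF : HasFiniteMoments (fun g => star (linEst κ x c g) * effChannel l m t g)
    (law lam (σ2 * ξ) δ) := by fun_prop
  have hsum := integral_sum_comp_measurePreserving M.measurePreserving_antenna hF.integrable
  rw [integral_star_linEst_mul_effChannel hlam hδ κ x c ht, Fintype.card_fin, nsmul_eq_mul] at hsum
  refine (congrArg normSq hsum).trans ?_
  simp only [normSq_mul, normSq_natCast, normSq_ofReal, star_def, normSq_conj]
  ring

variable [IsProbabilityMeasure (ℙ : Measure Ω)]

lemma indepFun_antenna : Pairwise fun n n' => M.antenna n ⟂ᵢ[ℙ] M.antenna n' :=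
  fun _ _ hne =>
    (iIndepFun_curry (fun q => M.measurable_antenna_apply q.1 q.2)
      M.iIndepFun_antenna_apply).indepFun hne

lemma integral_normSq_sum_star_linEst_mul_hEff (hlam : ∀ l m, 0 ≤ lam l m) (hδ : 0 ≤ δ) {t : ℕ}
    (ht : B < t) (c : Fin B → ℂ) (l : Fin L) (m : Fin K) :
    ∫ ω, normSq (∑ n, star (linEst κ x c (M.antenna n ω)) * M.hEff l m t n ω) =
      N ^ 2 * (lam l m ^ 2 * normSq (c ⬝ᵥ Dmat δ t B *ᵥ x l m)) +
        N * complexVariance (fun g => star (linEst κ x c g) * effChannel l m t g)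
          (law lam (σ2 * ξ) δ) := by
  have hF : HasFiniteMoments (fun g => star (linEst κ x c g) * effChannel l m t g)
    (law lam (σ2 * ξ) δ) := by fun_prop
  have hsum := integral_normSq_sum_comp_measurePreserving M.measurePreserving_antenna
    M.indepFun_antenna hF.memLp_two
  rw [integral_star_linEst_mul_effChannel hlam hδ κ x c ht, Fintype.card_fin] at hsum
  refine hsum.trans ?_
  simp only [normSq_mul, normSq_ofReal, star_def, normSq_conj]
  ring

lemma integral_normSq_sum_star_linEst_mul_ups {t : ℕ} (ht : B < t) (c : Fin B → ℂ)
    (p : Fin L → Fin K → ℝ) :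
    ∫ ω, normSq (∑ n, star (linEst κ x c (M.antenna n ω)) * M.ups p t n ω) =
      N * complexVariance (fun g => star (linEst κ x c g) * dataDistortion κ p t g)
        (law lam (σ2 * ξ) δ) := by
  have hF : HasFiniteMoments (fun g => star (linEst κ x c g) * dataDistortion κ p t g)
    (law lam (σ2 * ξ) δ) := by fun_prop
  have hsum := integral_normSq_sum_comp_measurePreserving M.measurePreserving_antenna
    M.indepFun_antenna hF.memLp_two
  rw [integral_star_linEst_mul_dataDistortion κ x c p ht, map_zero, mul_zero, zero_add,
    Fintype.card_fin] at hsum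
  exact hsum

lemma filterSINR_linEst (hlam : ∀ l m, 0 ≤ lam l m) (hδ : 0 ≤ δ) {t : ℕ} (ht : B < t)
    (c : Fin B → ℂ) (p : Fin L → Fin K → ℝ) (j : Fin L) (k : Fin K) :
    M.filterSINR (fun n ω => linEst κ x c (M.antenna n ω)) p j k t =
      N ^ 2 * (p j k * lam j k ^ 2 * normSq (c ⬝ᵥ Dmat δ t B *ᵥ x j k)) /
        (N ^ 2 * ∑ lm ∈ Finset.univ.erase (j, k),
            p lm.1 lm.2 * lam lm.1 lm.2 ^ 2 * normSq (c ⬝ᵥ Dmat δ t B *ᵥ x lm.1 lm.2)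
          + N * residualPower lam (σ2 * ξ) κ δ x c p t) := by
  have hnoise : ∫ ω, ∑ n, normSq (linEst κ x c (M.antenna n ω)) =
      N * ∫ g, normSq (linEst κ x c g) ∂law lam (σ2 * ξ) δ := by
    rw [integral_sum_comp_measurePreserving M.measurePreserving_antenna
      (F := fun g => normSq (linEst κ x c g)) (HasFiniteMoments.integrable (by fun_prop)),
      Fintype.card_fin, nsmul_eq_mul]
  have hown : ∑ l, ∑ m, p l m * lam l m ^ 2 * normSq (c ⬝ᵥ Dmat δ t B *ᵥ x l m) =
      p j k * lam j k ^ 2 * normSq (c ⬝ᵥ Dmat δ t B *ᵥ x j k) +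
        ∑ lm ∈ Finset.univ.erase (j, k),
          p lm.1 lm.2 * lam lm.1 lm.2 ^ 2 * normSq (c ⬝ᵥ Dmat δ t B *ᵥ x lm.1 lm.2) := by
    rw [← Fintype.sum_prod_type' fun l m =>
        p l m * lam l m ^ 2 * normSq (c ⬝ᵥ Dmat δ t B *ᵥ x l m),
      ← Finset.add_sum_erase _ _ (Finset.mem_univ (j, k))]
  have hpower :
      ∑ l, ∑ m, p l m * ∫ ω, normSq (∑ n, star (linEst κ x c (M.antenna n ω)) * M.hEff l m t n ω) =
        N ^ 2 * ∑ l, ∑ m, p l m * lam l m ^ 2 * normSq (c ⬝ᵥ Dmat δ t B *ᵥ x l m) +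
          N * ∑ l, ∑ m, p l m *
            complexVariance (fun g => star (linEst κ x c g) * effChannel l m t g)
              (law lam (σ2 * ξ) δ) := by
    simp only [integral_normSq_sum_star_linEst_mul_hEff M hlam hδ ht, mul_add,
      Finset.sum_add_distrib, Finset.mul_sum, mul_left_comm (p _ _), mul_assoc]
  rw [filterSINR, normSq_integral_sum_star_linEst_mul_hEff M hlam hδ ht,
    integral_normSq_sum_star_linEst_mul_ups M ht, hnoise, residualPower, hpower, hown]
  congr 1 <;> ring

end

theorem tendsto_filterSINR_linEst {B L K : ℕ} {lam : Fin L → Fin K → ℝ} {σ2 ξ κ δ : ℝ}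
    {x : Fin L → Fin K → Fin B → ℂ} {Ωf : ℕ → Type*} [∀ N, MeasureSpace (Ωf N)]
    [∀ N, IsProbabilityMeasure (ℙ : Measure (Ωf N))]
    (M : ∀ N : ℕ, MIMOModel (Ωf N) N B L K lam σ2 ξ κ δ x)
    (hlam : ∀ l m, 0 ≤ lam l m) (hδ : 0 ≤ δ) {t : ℕ} (ht : B < t) (c : Fin B → ℂ)
    (p : Fin L → Fin K → ℝ) (j : Fin L) (k : Fin K)
    (hPC : ∑ lm ∈ Finset.univ.erase (j, k),
      p lm.1 lm.2 * lam lm.1 lm.2 ^ 2 * normSq (c ⬝ᵥ Dmat δ t B *ᵥ x lm.1 lm.2) ≠ 0) :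
    Filter.Tendsto
      (fun N => (M N).filterSINR (fun n ω => linEst κ x c ((M N).antenna n ω)) p j k t)
      Filter.atTop
      (nhds (p j k * lam j k ^ 2 * normSq (c ⬝ᵥ Dmat δ t B *ᵥ x j k) /
        ∑ lm ∈ Finset.univ.erase (j, k),
          p lm.1 lm.2 * lam lm.1 lm.2 ^ 2 * normSq (c ⬝ᵥ Dmat δ t B *ᵥ x lm.1 lm.2))) := by
  simp only [filterSINR_linEst (M _) hlam hδ ht]
  exact tendsto_sq_mul_div_sq_mul_add hPC _ _

end MIMOModel

/-- **Asymptotic SINR limit with MRC (Corollary 1).** Fix all parameters except the number of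
antennas `N`, and let `A_{lm} = x̃_{jk}ᴴ D_{δ(t)} Ψ_j⁻¹ D_{δ(t)}ᴴ x̃_{lm}`. If `x̃_{jk} ≠ 0`
and the pilot-contamination constant `Σ_{(l,m)≠(j,k)} p_{lm} λ_{jlm}² |A_{lm}|²` is strictly
positive, then as `N → ∞` the SINR with MRC converges to
`p_{jk} λ_{jjk}² A_{jk}² / Σ_{(l,m)≠(j,k)} p_{lm} λ_{jlm}² |A_{lm}|²`: the distortion-noise
and receiver-noise contributions vanish and only pilot contamination remains. -/
theorem mrc_asymptotic_sinr
    {B L K : ℕ} {lam : Fin L → Fin K → ℝ} {σ2 ξ κ δ : ℝ}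
    {x : Fin L → Fin K → Fin B → ℂ}
    (Ωf : ℕ → Type*) [∀ N, MeasureSpace (Ωf N)]
    [∀ N, IsProbabilityMeasure (ℙ : Measure (Ωf N))]
    (M : ∀ N : ℕ, MIMOModel (Ωf N) N B L K lam σ2 ξ κ δ x)
    (hlam : ∀ l k, 0 < lam l k) (hσ2 : 0 < σ2) (hξ : 1 ≤ ξ) (hκ : 0 ≤ κ) (hδ : 0 ≤ δ)
    (t : ℕ) (ht : B < t) (j : Fin L) (k : Fin K)
    (p : Fin L → Fin K → ℝ) (hp : ∀ l m, 0 < p l m)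
    (A : Fin L → Fin K → ℂ)
    (hA : ∀ l m, A l m = star (x j k) ⬝ᵥ (Dmat δ t B * (PsiMat lam σ2 ξ κ δ x)⁻¹
        * (Dmat δ t B)ᴴ).mulVec (x l m))
    (hx : x j k ≠ 0)
    (hPC : 0 < ∑ lm ∈ (Finset.univ : Finset (Fin L × Fin K)).erase (j, k),
        p lm.1 lm.2 * lam lm.1 lm.2 ^ 2 * Complex.normSq (A lm.1 lm.2)) :
    Filter.Tendsto (fun N : ℕ => (((M N).SINR p j k t : ℝ) : ℂ)) Filter.atTop
      (nhds (((p j k : ℝ) : ℂ) * ((lam j k : ℝ) : ℂ) ^ 2 * A j k ^ 2 /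
        ((∑ lm ∈ (Finset.univ : Finset (Fin L × Fin K)).erase (j, k),
            p lm.1 lm.2 * lam lm.1 lm.2 ^ 2 * Complex.normSq (A lm.1 lm.2) : ℝ) : ℂ))) := by
  let c := star (x j k) ᵥ* (Dmat δ t B * (PsiMat lam σ2 ξ κ δ x)⁻¹)
  have hcA (l : Fin L) (m : Fin K) : c ⬝ᵥ Dmat δ t B *ᵥ x l m = A l m := by
    rw [hA, conjTranspose_Dmat, ← mulVec_mulVec, dotProduct_mulVec (star (x j k))]
  have hA_im : (A j k).im = 0 := by
    rw [hA]
    exact (isHermitian_mul_mul_conjTranspose _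
      (isHermitian_PsiMat lam σ2 ξ κ δ x).inv).im_star_dotProduct_mulVec_self _
  have hlim := MIMOModel.tendsto_filterSINR_linEst M (fun l m => (hlam l m).le) hδ ht c p j k
    (by simpa only [hcA] using hPC.ne')
  simp only [hcA] at hlim
  simp only [(M _).SINR_eq_filterSINR_linEst (hlam j k).ne']
  simpa only [ofReal_div, ofReal_mul, ofReal_pow, ofReal_normSq_eq_sq_of_im_eq_zero hA_im]
    using hlim.ofReal
end
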